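/- arXiv:2009.12594 — 12 statements merged into one kernel-verified Lean document; each statement's English description precedes it below -/
import Mathlib

section
/- Let w₁, w₂, a > 0 and define G₂(a,w,t) = e^{(w₁+w₂−a)t}/((e^{w₁t}−1)(e^{w₂t}−1)) − 1/(w₁w₂t²) for t > 0. Then the function σ ↦ ∫₀^∞ G₂(a,w,t) t^{σ−1} dt has a zero in the open interval (1,2) if and only if 0 < a < (w₁+w₂)/2. -/
open MeasureTheory Real Set

/-- Definition of the Barnes `G₂` kernel:
`G₂(a, w, t) = e^{(w₁+w₂−a)t}/((e^{w₁t}−1)(e^{w₂t}−1)) − 1/(w₁w₂t²)`. -/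
noncomputable def G₂ (a w₁ w₂ t : ℝ) : ℝ :=
  Real.exp ((w₁ + w₂ - a) * t) / ((Real.exp (w₁ * t) - 1) * (Real.exp (w₂ * t) - 1))
    - 1 / (w₁ * w₂ * t ^ 2)

open Filter Topology Asymptotics

lemma pos_near_one (f : ℝ → ℝ)
    (hfi : ∀ σ ∈ Ioo (1 : ℝ) 2, IntegrableOn (fun t => f t * t ^ (σ - 1)) (Ioi 0))
    (k δ : ℝ) (hk : 0 < k) (hδ : 0 < δ) (hδ1 : δ ≤ 1) (h : ∀ t ∈ Ioc 0 δ, k / t ≤ f t) :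
    ∃ σ ∈ Ioo (1 : ℝ) 2, 0 < ∫ t in Ioi (0 : ℝ), f t * t ^ (σ - 1) := by
  set M := ∫ t in Ioi δ, |f t * t ^ ((3 / 2 : ℝ) - 1)| * δ ^ (-(1 / 2) : ℝ) with hM
  have hsub : Ioi δ ⊆ Ioi 0 := Ioi_subset_Ioi hδ.le
  have hsub' : Ioc 0 δ ⊆ Ioi 0 := Ioc_subset_Ioi_self
  have hMi : IntegrableOn (fun t => |f t * t ^ ((3 / 2 : ℝ) - 1)| * δ ^ (-(1 / 2) : ℝ)) (Ioi δ) :=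
    (((hfi (3 / 2) (by norm_num)).mono_set hsub).abs).mul_const _
  obtain ⟨ε, hε0, hε1, hε2⟩ : ∃ ε : ℝ, 0 < ε ∧ ε ≤ 1 / 4 ∧ M < k * δ / ε := by
    refine ⟨min (1 / 4) (k * δ / (|M| + 1)), by positivity, min_le_left _ _, ?_⟩
    rw [lt_div_iff₀ (by positivity)]
    have h1 : min (1 / 4) (k * δ / (|M| + 1)) ≤ k * δ / (|M| + 1) := min_le_right _ _
    have h0 : 0 < min (1 / 4) (k * δ / (|M| + 1)) := by positivity
    rw [le_div_iff₀ (by positivity)] at h1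
    nlinarith [le_abs_self M]
  refine ⟨1 + ε, ⟨by linarith, by linarith⟩, ?_⟩
  have hi := hfi (1 + ε) ⟨by linarith, by linarith⟩
  rw [← Ioc_union_Ioi_eq_Ioi hδ.le, setIntegral_union (Ioc_disjoint_Ioi le_rfl) measurableSet_Ioi
    (hi.mono_set hsub') (hi.mono_set hsub)]
  have e2 : -M ≤ ∫ t in Ioi δ, f t * t ^ (1 + ε - 1) := by
    rw [hM, ← integral_neg]
    refine setIntegral_mono_on hMi.neg (hi.mono_set hsub) measurableSet_Ioi ?_
    intro t ht
    have ht' : δ < t := ht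
    have ht0 : 0 < t := hδ.trans ht
    have e : t ^ (1 + ε - 1) ≤ t ^ ((3 / 2 : ℝ) - 1) * δ ^ (-(1 / 2) : ℝ) := by
      have : t ^ (1 + ε - 1) = t ^ ((3 / 2 : ℝ) - 1) * t ^ (ε - 1 / 2) := by
        rw [← rpow_add ht0]; congr 1; ring
      rw [this]
      gcongr
      calc t ^ (ε - 1 / 2) ≤ δ ^ (ε - 1 / 2) :=
            rpow_le_rpow_of_nonpos hδ ht'.le (by linarith)
        _ ≤ _ := rpow_le_rpow_of_exponent_ge hδ hδ1 (by linarith)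
    have e3 : 0 < t ^ ((3 / 2 : ℝ) - 1) := by positivity
    have e4 : |f t * t ^ (1 + ε - 1)| ≤ |f t * t ^ ((3 / 2 : ℝ) - 1)| * δ ^ (-(1 / 2) : ℝ) := by
      rw [abs_mul, abs_mul, abs_of_pos e3, mul_assoc, abs_of_pos (rpow_pos_of_pos ht0 _)]
      gcongr
    linarith [neg_abs_le (f t * t ^ (1 + ε - 1))]
  have hii : IntegrableOn (fun t : ℝ => k * t ^ (ε - 1)) (Ioc 0 δ) := by
    have := (intervalIntegral.intervalIntegrable_rpow' (a := 0) (b := δ) (r := ε - 1) (by linarith))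
    rw [intervalIntegrable_iff_integrableOn_Ioc_of_le hδ.le] at this
    exact this.const_mul _
  have e1 : k * δ / ε ≤ ∫ t in Ioc 0 δ, f t * t ^ (1 + ε - 1) := by
    have e : k * δ / ε ≤ ∫ t in Ioc 0 δ, k * t ^ (ε - 1) := by
      rw [← intervalIntegral.integral_of_le hδ.le, intervalIntegral.integral_const_mul,
        integral_rpow (Or.inl (by linarith))]
      rw [show ε - 1 + 1 = ε by ring, zero_rpow hε0.ne', sub_zero, mul_div_assoc]
      gcongr
      simpa using rpow_le_rpow_of_exponent_ge hδ hδ1 (show ε ≤ 1 by linarith)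
    refine e.trans (setIntegral_mono_on hii (hi.mono_set hsub') measurableSet_Ioc ?_)
    intro t ht
    have ht0 : 0 < t := ht.1
    have : k * t ^ (ε - 1) = k / t * t ^ (1 + ε - 1) := by
      rw [rpow_sub_one ht0.ne', show 1 + ε - 1 = ε by ring]; ring
    rw [this]
    gcongr
    exact h t ht
  linarith

lemma neg_near_two (f : ℝ → ℝ)
    (hfi : ∀ σ ∈ Ioo (1 : ℝ) 2, IntegrableOn (fun t => f t * t ^ (σ - 1)) (Ioi 0))
    (k T : ℝ) (hk : 0 < k) (hT : 1 ≤ T) (h : ∀ t ∈ Ioi T, f t ≤ - (k / t ^ 2)) :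
    ∃ σ ∈ Ioo (1 : ℝ) 2, ∫ t in Ioi (0 : ℝ), f t * t ^ (σ - 1) < 0 := by
  have hT0 : 0 < T := by linarith
  set M := ∫ t in Ioc 0 T, |f t * t ^ ((3 / 2 : ℝ) - 1)| * T ^ ((1 / 2) : ℝ) with hM
  have hsub : Ioi T ⊆ Ioi 0 := Ioi_subset_Ioi hT0.le
  have hsub' : Ioc 0 T ⊆ Ioi 0 := Ioc_subset_Ioi_self
  have hMi : IntegrableOn (fun t => |f t * t ^ ((3 / 2 : ℝ) - 1)| * T ^ ((1 / 2) : ℝ)) (Ioc 0 T) :=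
    (((hfi (3 / 2) (by norm_num)).mono_set hsub').abs).mul_const _
  obtain ⟨ε, hε0, hε1, hε2⟩ : ∃ ε : ℝ, 0 < ε ∧ ε ≤ 1 / 4 ∧ M < k * T⁻¹ / ε := by
    refine ⟨min (1 / 4) (k * T⁻¹ / (|M| + 1)), by positivity, min_le_left _ _, ?_⟩
    rw [lt_div_iff₀ (by positivity)]
    have h1 : min (1 / 4) (k * T⁻¹ / (|M| + 1)) ≤ k * T⁻¹ / (|M| + 1) := min_le_right _ _
    have h0 : 0 < min (1 / 4) (k * T⁻¹ / (|M| + 1)) := by positivity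
    rw [le_div_iff₀ (by positivity)] at h1
    nlinarith [le_abs_self M]
  refine ⟨2 - ε, ⟨by linarith, by linarith⟩, ?_⟩
  have hi := hfi (2 - ε) ⟨by linarith, by linarith⟩
  rw [← Ioc_union_Ioi_eq_Ioi hT0.le, setIntegral_union (Ioc_disjoint_Ioi le_rfl) measurableSet_Ioi
    (hi.mono_set hsub') (hi.mono_set hsub)]
  have e2 : ∫ t in Ioc 0 T, f t * t ^ (2 - ε - 1) ≤ M := by
    rw [hM]
    refine setIntegral_mono_on (hi.mono_set hsub') hMi measurableSet_Ioc ?_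
    intro t ht
    have ht0 : 0 < t := ht.1
    have e : t ^ (2 - ε - 1) ≤ t ^ ((3 / 2 : ℝ) - 1) * T ^ ((1 / 2) : ℝ) := by
      have : t ^ (2 - ε - 1) = t ^ ((3 / 2 : ℝ) - 1) * t ^ (1 / 2 - ε) := by
        rw [← rpow_add ht0]; congr 1; ring
      rw [this]
      gcongr
      calc t ^ (1 / 2 - ε) ≤ T ^ (1 / 2 - ε) :=
            rpow_le_rpow ht0.le ht.2 (by linarith)
        _ ≤ _ := rpow_le_rpow_of_exponent_le hT (by linarith)
    have e3 : 0 < t ^ ((3 / 2 : ℝ) - 1) := by positivity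
    have e4 : |f t * t ^ (2 - ε - 1)| ≤ |f t * t ^ ((3 / 2 : ℝ) - 1)| * T ^ ((1 / 2) : ℝ) := by
      rw [abs_mul, abs_mul, abs_of_pos e3, mul_assoc, abs_of_pos (rpow_pos_of_pos ht0 _)]
      gcongr
    linarith [le_abs_self (f t * t ^ (2 - ε - 1))]
  have hii : IntegrableOn (fun t : ℝ => -(k * t ^ (-ε - 1))) (Ioi T) :=
    ((integrableOn_Ioi_rpow_of_lt (by linarith) hT0).const_mul _).neg
  have e1 : ∫ t in Ioi T, f t * t ^ (2 - ε - 1) ≤ - (k * T⁻¹ / ε) := by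
    have e : ∫ t in Ioi T, -(k * t ^ (-ε - 1)) ≤ - (k * T⁻¹ / ε) := by
      rw [integral_neg, integral_const_mul, integral_Ioi_rpow_of_lt (by linarith) hT0]
      rw [show -ε - 1 + 1 = -ε by ring, neg_div_neg_eq, mul_div_assoc]
      gcongr
      simpa [rpow_neg_one] using rpow_le_rpow_of_exponent_le hT (show -1 ≤ -ε by linarith)
    refine le_trans (setIntegral_mono_on (hi.mono_set hsub) hii measurableSet_Ioi ?_) e
    intro t ht
    have ht0 : 0 < t := hT0.trans ht
    have : -(k * t ^ (-ε - 1)) = - (k / t ^ 2) * t ^ (2 - ε - 1) := by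
      rw [show 2 - ε - 1 = -ε - 1 + 2 by ring, rpow_add ht0, rpow_two]; field_simp
    rw [this]
    gcongr
    exact h t ht
  linarith

lemma tendsto_exp_one (w : ℝ) :
    Tendsto (fun t => (exp (w * t) - 1) / t) (𝓝[>] 0) (𝓝 w) := by
  have h : HasDerivAt (fun t => exp (w * t)) w 0 := by
    simpa using ((hasDerivAt_id (0 : ℝ)).const_mul w).exp
  have := (hasDerivAt_iff_tendsto_slope.1 h).mono_left
    (nhdsWithin_mono 0 (fun x (hx : 0 < x) => hx.ne' : Ioi (0 : ℝ) ⊆ {0}ᶜ))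
  refine this.congr fun t => ?_
  simp [slope_def_field]

lemma tendsto_exp_two (w : ℝ) (hw : 0 < w) :
    Tendsto (fun t => ((exp (w * t) - 1) / t - w) / t) (𝓝[>] 0) (𝓝 (w ^ 2 / 2)) := by
  have h := (Real.exp_sub_sum_range_succ_isLittleO_pow 2).tendsto_div_nhds_zero
  have h2 : Tendsto (fun t : ℝ => w * t) (𝓝[>] 0) (𝓝 0) := by
    have : Tendsto (fun t : ℝ => w * t) (𝓝 0) (𝓝 (w * 0)) := by
      exact (continuous_const.mul continuous_id).tendsto 0
    rw [mul_zero] at this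
    exact this.mono_left nhdsWithin_le_nhds
  have h3 := ((h.comp h2).const_mul (w ^ 2)).add_const (w ^ 2 / 2)
  simp only [mul_zero, zero_add] at h3
  refine h3.congr' ?_
  filter_upwards [self_mem_nhdsWithin] with t ht
  have ht0 : t ≠ 0 := (show 0 < t from ht).ne'
  simp [Finset.sum_range_succ]
  field_simp
  ring

lemma tendsto_G_zero (w₁ w₂ a : ℝ) (hw₁ : 0 < w₁) (hw₂ : 0 < w₂) :
    Tendsto (fun t => G₂ a w₁ w₂ t * t) (𝓝[>] 0) (𝓝 (((w₁ + w₂) / 2 - a) / (w₁ * w₂))) := by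
  have h1 := tendsto_exp_one w₁
  have h2 := tendsto_exp_one w₂
  have h3 := tendsto_exp_one (w₁ + w₂ - a)
  have h := ((h3.const_mul (w₁ * w₂)).sub (((tendsto_exp_two w₁ hw₁).mul h2).add
    ((tendsto_exp_two w₂ hw₂).const_mul w₁))).div ((h1.mul h2).const_mul (w₁ * w₂)) (by positivity)
  have e : (w₁ * w₂ * (w₁ + w₂ - a) - (w₁ ^ 2 / 2 * w₂ + w₁ * (w₂ ^ 2 / 2))) /
      (w₁ * w₂ * (w₁ * w₂)) = ((w₁ + w₂) / 2 - a) / (w₁ * w₂) := by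
    field_simp; ring
  rw [e] at h
  refine h.congr' ?_
  filter_upwards [self_mem_nhdsWithin] with t ht
  have ht0 : 0 < t := ht
  have p1 : 0 < exp (w₁ * t) - 1 := by
    have := Real.one_lt_exp_iff.2 (show 0 < w₁ * t by positivity); linarith
  have p2 : 0 < exp (w₂ * t) - 1 := by
    have := Real.one_lt_exp_iff.2 (show 0 < w₂ * t by positivity); linarith
  simp only [Pi.div_apply, G₂]
  generalize exp (w₁ * t) - 1 = A at *
  generalize exp (w₂ * t) - 1 = B at *
  generalize exp ((w₁ + w₂ - a) * t) = C at *
  field_simp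
  ring

lemma tendsto_exp_neg' (w : ℝ) (hw : 0 < w) :
    Tendsto (fun t => 1 - exp (-w * t)) atTop (𝓝 1) := by
  have := (tendsto_rpow_mul_exp_neg_mul_atTop_nhds_zero 0 w hw).const_sub 1
  simpa using this

lemma tendsto_G_top (w₁ w₂ a : ℝ) (hw₁ : 0 < w₁) (hw₂ : 0 < w₂) (ha : 0 < a) :
    Tendsto (fun t => G₂ a w₁ w₂ t * t ^ 2) atTop (𝓝 (-(1 / (w₁ * w₂)))) := by
  have h := ((tendsto_rpow_mul_exp_neg_mul_atTop_nhds_zero 2 a ha).div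
    ((tendsto_exp_neg' w₁ hw₁).mul (tendsto_exp_neg' w₂ hw₂)) (by norm_num)).sub_const
      (1 / (w₁ * w₂))
  simp only [mul_one, div_one, zero_sub] at h
  refine h.congr' ?_
  filter_upwards [eventually_gt_atTop 0] with t ht
  have q1 : exp (w₁ * t) * exp (-w₁ * t) = 1 := by rw [← exp_add]; simp
  have q2 : exp (w₂ * t) * exp (-w₂ * t) = 1 := by rw [← exp_add]; simp
  have q3 : exp ((w₁ + w₂ - a) * t) = exp (w₁ * t) * exp (w₂ * t) * exp (-a * t) := by
    rw [← exp_add, ← exp_add]; congr 1; ring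
  have p1 : 0 < exp (w₁ * t) - 1 := by
    have := Real.one_lt_exp_iff.2 (show 0 < w₁ * t by positivity); linarith
  have p2 : 0 < exp (w₂ * t) - 1 := by
    have := Real.one_lt_exp_iff.2 (show 0 < w₂ * t by positivity); linarith
  have r1 : 1 - exp (-w₁ * t) = (exp (w₁ * t) - 1) / exp (w₁ * t) := by
    rw [eq_div_iff (exp_pos _).ne']; linarith
  have r2 : 1 - exp (-w₂ * t) = (exp (w₂ * t) - 1) / exp (w₂ * t) := by
    rw [eq_div_iff (exp_pos _).ne']; linarith
  simp only [Pi.div_apply, G₂, rpow_two, r1, r2, q3]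
  field_simp

lemma G_bigO_zero (w₁ w₂ a : ℝ) (hw₁ : 0 < w₁) (hw₂ : 0 < w₂) :
    (G₂ a w₁ w₂) =O[𝓝[>] 0] (fun t : ℝ => t ^ (-1 : ℝ)) := by
  have hpos : ∀ᶠ t : ℝ in 𝓝[>] 0, 0 < t := self_mem_nhdsWithin
  refine isBigO_of_div_tendsto_nhds ?_ _ ((tendsto_G_zero w₁ w₂ a hw₁ hw₂).congr' ?_)
  · filter_upwards [hpos] with t ht h
    exact absurd h (rpow_pos_of_pos ht _).ne'
  · filter_upwards [hpos] with t ht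
    simp [rpow_neg_one]

lemma G_bigO_top (w₁ w₂ a : ℝ) (hw₁ : 0 < w₁) (hw₂ : 0 < w₂) (ha : 0 < a) :
    (G₂ a w₁ w₂) =O[atTop] (fun t : ℝ => t ^ (-2 : ℝ)) := by
  refine isBigO_of_div_tendsto_nhds ?_ _ ((tendsto_G_top w₁ w₂ a hw₁ hw₂ ha).congr' ?_)
  · filter_upwards [eventually_gt_atTop 0] with t ht h
    exact absurd h (rpow_pos_of_pos ht _).ne'
  · filter_upwards [eventually_gt_atTop 0] with t ht
    simp

lemma G_cont (w₁ w₂ a : ℝ) (hw₁ : 0 < w₁) (hw₂ : 0 < w₂) :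
    ContinuousOn (G₂ a w₁ w₂) (Ioi 0) := by
  unfold G₂
  refine ContinuousOn.sub (ContinuousOn.div (by fun_prop) (by fun_prop) ?_)
    (ContinuousOn.div (by fun_prop) (by fun_prop) ?_)
  · intro t ht
    have ht0 : 0 < t := ht
    have p1 : 0 < exp (w₁ * t) - 1 := by
      have := Real.one_lt_exp_iff.2 (show 0 < w₁ * t by positivity); linarith
    have p2 : 0 < exp (w₂ * t) - 1 := by
      have := Real.one_lt_exp_iff.2 (show 0 < w₂ * t by positivity); linarith
    positivity
  · intro t ht
    have ht0 : 0 < t := ht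
    positivity

lemma G_int (w₁ w₂ a : ℝ) (hw₁ : 0 < w₁) (hw₂ : 0 < w₂) (ha : 0 < a) (σ : ℝ)
    (hσ : σ ∈ Ioo (1 : ℝ) 2) :
    IntegrableOn (fun t => G₂ a w₁ w₂ t * t ^ (σ - 1)) (Ioi 0) := by
  have := mellin_convergent_of_isBigO_scalar
    ((G_cont w₁ w₂ a hw₁ hw₂).locallyIntegrableOn measurableSet_Ioi)
    (G_bigO_top w₁ w₂ a hw₁ hw₂ ha) hσ.2 (G_bigO_zero w₁ w₂ a hw₁ hw₂) hσ.1
  simpa only [mul_comm] using this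

lemma F_cont (w₁ w₂ a : ℝ) (hw₁ : 0 < w₁) (hw₂ : 0 < w₂) (ha : 0 < a) :
    ContinuousOn (fun σ : ℝ => ∫ t in Ioi (0 : ℝ), G₂ a w₁ w₂ t * t ^ (σ - 1)) (Ioo 1 2) := by
  intro σ hσ
  have hc : ContinuousOn (fun t => (G₂ a w₁ w₂ t : ℂ)) (Ioi 0) :=
    Complex.continuous_ofReal.comp_continuousOn (G_cont w₁ w₂ a hw₁ hw₂)
  have h := mellin_differentiableAt_of_isBigO_rpow (s := (σ : ℂ))
    (f := fun t => (G₂ a w₁ w₂ t : ℂ)) (a := 2) (b := 1)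
    (hc.locallyIntegrableOn measurableSet_Ioi)
    (Complex.isBigO_ofReal_left.2 (G_bigO_top w₁ w₂ a hw₁ hw₂ ha)) (by simpa using hσ.2)
    (Complex.isBigO_ofReal_left.2 (G_bigO_zero w₁ w₂ a hw₁ hw₂)) (by simpa using hσ.1)
  have h2 : ContinuousAt (fun σ : ℝ =>
      (mellin (fun t => (G₂ a w₁ w₂ t : ℂ)) (σ : ℂ)).re) σ := by
    refine Complex.continuous_re.continuousAt.comp ?_
    exact ContinuousAt.comp (g := mellin (fun t => (G₂ a w₁ w₂ t : ℂ))) h.continuousAt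
      Complex.continuous_ofReal.continuousAt
  refine ContinuousAt.continuousWithinAt (h2.congr (Eventually.of_forall fun s => ?_))
  have : mellin (fun t => (G₂ a w₁ w₂ t : ℂ)) (s : ℂ)
      = ((∫ t in Ioi (0 : ℝ), G₂ a w₁ w₂ t * t ^ (s - 1) : ℝ) : ℂ) := by
    rw [mellin, ← integral_complex_ofReal]
    refine setIntegral_congr_fun measurableSet_Ioi fun t ht => ?_
    have ht0 : 0 < t := ht
    simp only [smul_eq_mul]
    push_cast [Complex.ofReal_cpow ht0.le]
    ring
  simp only [this, Complex.ofReal_re]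

lemma exp_gt (x : ℝ) (hx : 0 < x) : x * exp (x / 2) < exp x - 1 := by
  have h := self_lt_sinh_iff.2 (show 0 < x / 2 by positivity)
  rw [sinh_eq] at h
  have h1 : exp x = exp (x / 2) * exp (x / 2) := by rw [← exp_add]; congr 1; ring
  have h2 : exp (x / 2) * exp (-(x / 2)) = 1 := by rw [← exp_add]; simp
  nlinarith [exp_pos (x / 2)]

lemma G_neg (w₁ w₂ a : ℝ) (hw₁ : 0 < w₁) (hw₂ : 0 < w₂) (ha : (w₁ + w₂) / 2 ≤ a) (t : ℝ)
    (ht : 0 < t) : G₂ a w₁ w₂ t < 0 := by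
  have h1 := exp_gt (w₁ * t) (by positivity)
  have h2 := exp_gt (w₂ * t) (by positivity)
  have h3 : exp ((w₁ + w₂ - a) * t) ≤ exp (w₁ * t / 2) * exp (w₂ * t / 2) := by
    rw [← exp_add]; gcongr; nlinarith
  have h4 := mul_lt_mul'' h1 h2 (by positivity) (by positivity)
  have p : 0 < (exp (w₁ * t) - 1) * (exp (w₂ * t) - 1) := lt_of_le_of_lt (by positivity) h4
  rw [G₂, sub_neg, div_lt_div_iff₀ p (by positivity), one_mul]
  refine lt_of_le_of_lt ?_ h4
  calc _ ≤ (exp (w₁ * t / 2) * exp (w₂ * t / 2)) * (w₁ * w₂ * t ^ 2) := by gcongr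
    _ = _ := by ring

theorem stmt0 (w₁ w₂ a : ℝ) (hw₁ : 0 < w₁) (hw₂ : 0 < w₂) (ha : 0 < a) :
    (∃ σ ∈ Set.Ioo (1 : ℝ) 2,
        ∫ t in Set.Ioi (0 : ℝ), G₂ a w₁ w₂ t * t ^ (σ - 1) = 0) ↔
      a < (w₁ + w₂) / 2 := by
  constructor
  · rintro ⟨σ, hσ, h0⟩
    by_contra hcon
    have hlt : ∀ t ∈ Ioi (0 : ℝ), G₂ a w₁ w₂ t * t ^ (σ - 1) < 0 := fun t ht =>
      mul_neg_of_neg_of_pos (G_neg w₁ w₂ a hw₁ hw₂ (not_lt.1 hcon) t ht) (rpow_pos_of_pos ht _)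
    have hpos : 0 < ∫ t in Ioi (0 : ℝ), -(G₂ a w₁ w₂ t * t ^ (σ - 1)) := by
      rw [setIntegral_pos_iff_support_of_nonneg_ae]
      · have : Function.support (fun t => -(G₂ a w₁ w₂ t * t ^ (σ - 1))) ∩ Ioi 0 = Ioi 0 :=
          inter_eq_right.2 fun t ht => (neg_pos.2 (hlt t ht)).ne'
        rw [this]
        simp
      · filter_upwards [ae_restrict_mem measurableSet_Ioi] with t ht
        exact (neg_pos.2 (hlt t ht)).le
      · exact (G_int w₁ w₂ a hw₁ hw₂ ha σ hσ).neg
    rw [integral_neg, h0] at hpos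
    simp at hpos
  · intro hlt
    have hL : 0 < ((w₁ + w₂) / 2 - a) / (w₁ * w₂) := div_pos (by linarith) (by positivity)
    set L := ((w₁ + w₂) / 2 - a) / (w₁ * w₂) with hLdef
    obtain ⟨s, hs, hs0⟩ : ∃ σ ∈ Ioo (1 : ℝ) 2,
        0 < ∫ t in Ioi (0 : ℝ), G₂ a w₁ w₂ t * t ^ (σ - 1) := by
      have h := (tendsto_G_zero w₁ w₂ a hw₁ hw₂).eventually (lt_mem_nhds (half_lt_self hL))
      obtain ⟨u, hu, hu'⟩ := mem_nhdsGT_iff_exists_Ioc_subset.1 h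
      refine pos_near_one _ (G_int w₁ w₂ a hw₁ hw₂ ha) (L / 2) (min u 1) (by positivity)
        (lt_min hu one_pos) (min_le_right _ _) fun t ht => ?_
      rw [div_le_iff₀ ht.1]
      exact le_of_lt (hu' ⟨ht.1, ht.2.trans (min_le_left _ _)⟩)
    obtain ⟨r, hr, hr0⟩ : ∃ σ ∈ Ioo (1 : ℝ) 2,
        ∫ t in Ioi (0 : ℝ), G₂ a w₁ w₂ t * t ^ (σ - 1) < 0 := by
      have hK : 0 < 1 / (w₁ * w₂) := by positivity
      have h := (tendsto_G_top w₁ w₂ a hw₁ hw₂ ha).eventually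
        (gt_mem_nhds (neg_lt_neg (half_lt_self hK)))
      obtain ⟨T, hT⟩ := eventually_atTop.1 h
      refine neg_near_two _ (G_int w₁ w₂ a hw₁ hw₂ ha) (1 / (w₁ * w₂) / 2) (max T 1)
        (by positivity) (le_max_right _ _) fun t ht => ?_
      have ht1 : max T 1 < t := ht
      have ht0 : 0 < t := lt_of_lt_of_le one_pos ((le_max_right T 1).trans ht1.le)
      rw [← neg_div, le_div_iff₀ (by positivity)]
      exact (hT t ((le_max_left _ _).trans ht1.le)).le
    obtain ⟨σ, hσ, h⟩ := isPreconnected_Ioo.intermediate_value hr hs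
      (F_cont w₁ w₂ a hw₁ hw₂ ha) (show (0 : ℝ) ∈ Icc _ _ from ⟨hr0.le, hs0.le⟩)
    exact ⟨σ, hσ, h⟩
end

section
/- Let w₁, w₂ > 0 and a ≥ (w₁+w₂)/2, and define G₂(a,w,t) = e^{(w₁+w₂−a)t}/((e^{w₁t}−1)(e^{w₂t}−1)) − 1/(w₁w₂t²) for t > 0. Then for every real σ with 1 < σ < 2 one has ∫₀^∞ G₂(a,w,t) t^{σ−1} dt < 0. -/
open MeasureTheory Real Set

lemma aux_lower (x : ℝ) (hx : 0 < x) : x * Real.exp (x / 2) < Real.exp x - 1 := by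
  have h := Real.self_lt_sinh_iff.2 (half_pos hx)
  rw [Real.sinh_eq] at h
  have e1 : Real.exp x = Real.exp (x / 2) * Real.exp (x / 2) := by
    rw [← Real.exp_add]; ring_nf
  have e2 : Real.exp (x / 2) * Real.exp (-(x / 2)) = 1 := by
    rw [← Real.exp_add]; simp
  have hp := Real.exp_pos (x / 2)
  nlinarith [mul_lt_mul_of_pos_left h hp]

lemma aux_upper (x : ℝ) : Real.exp x - 1 ≤ x * Real.exp x := by
  have h := Real.add_one_le_exp (-x)
  have e2 : Real.exp x * Real.exp (-x) = 1 := by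
    rw [← Real.exp_add]; simp
  nlinarith [mul_le_mul_of_nonneg_left h (Real.exp_pos x).le]

lemma G2_neg (w₁ w₂ a t : ℝ) (hw₁ : 0 < w₁) (hw₂ : 0 < w₂)
    (ha : (w₁ + w₂) / 2 ≤ a) (ht : 0 < t) : G₂ a w₁ w₂ t < 0 := by
  have h1 : 0 < w₁ * t := by positivity
  have h2 : 0 < w₂ * t := by positivity
  have l1 := aux_lower _ h1
  have l2 := aux_lower _ h2
  have p1 : 0 < w₁ * t * Real.exp (w₁ * t / 2) := by positivity
  have p2 : 0 < w₂ * t * Real.exp (w₂ * t / 2) := by positivity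
  have q1 := p1.trans l1
  have q2 := p2.trans l2
  have hm := mul_lt_mul'' l1 l2 p1.le p2.le
  have he : Real.exp ((w₁ + w₂ - a) * t) ≤ Real.exp (w₁ * t / 2) * Real.exp (w₂ * t / 2) := by
    rw [← Real.exp_add]
    apply Real.exp_le_exp.2
    nlinarith
  unfold G₂
  rw [sub_neg, div_lt_div_iff₀ (mul_pos q1 q2) (by positivity), one_mul]
  have hc : 0 < w₁ * w₂ * t ^ 2 := by positivity
  nlinarith [mul_le_mul_of_nonneg_right he hc.le]

lemma G2_ge (w₁ w₂ a t : ℝ) (hw₁ : 0 < w₁) (hw₂ : 0 < w₂) (ht : 0 < t) :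
    -(1 / (w₁ * w₂ * t ^ 2)) ≤ G₂ a w₁ w₂ t := by
  have q1 : 0 < Real.exp (w₁ * t) - 1 := by
    have := Real.add_one_le_exp (w₁ * t)
    have : 0 < w₁ * t := by positivity
    linarith
  have q2 : 0 < Real.exp (w₂ * t) - 1 := by
    have := Real.add_one_le_exp (w₂ * t)
    have : 0 < w₂ * t := by positivity
    linarith
  unfold G₂
  have : 0 < Real.exp ((w₁ + w₂ - a) * t) / ((Real.exp (w₁ * t) - 1) * (Real.exp (w₂ * t) - 1)) := by
    positivity
  linarith

lemma G2_ge' (w₁ w₂ a t : ℝ) (hw₁ : 0 < w₁) (hw₂ : 0 < w₂) (ht : 0 < t) :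
    -(a / (w₁ * w₂) * t⁻¹) ≤ G₂ a w₁ w₂ t := by
  have q1 : 0 < Real.exp (w₁ * t) - 1 := by
    have := Real.add_one_le_exp (w₁ * t)
    have : 0 < w₁ * t := by positivity
    linarith
  have q2 : 0 < Real.exp (w₂ * t) - 1 := by
    have := Real.add_one_le_exp (w₂ * t)
    have : 0 < w₂ * t := by positivity
    linarith
  have u := mul_le_mul (aux_upper (w₁ * t)) (aux_upper (w₂ * t)) q2.le (by positivity)
  have e : Real.exp ((w₁ + w₂ - a) * t)
      = Real.exp (w₁ * t) * Real.exp (w₂ * t) * Real.exp (-(a * t)) := by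
    rw [← Real.exp_add, ← Real.exp_add]; ring_nf
  have key : (1 - a * t) / (w₁ * w₂ * t ^ 2) ≤
      Real.exp ((w₁ + w₂ - a) * t) / ((Real.exp (w₁ * t) - 1) * (Real.exp (w₂ * t) - 1)) := by
    calc (1 - a * t) / (w₁ * w₂ * t ^ 2) ≤ Real.exp (-(a * t)) / (w₁ * w₂ * t ^ 2) := by
          gcongr
          have := Real.add_one_le_exp (-(a * t))
          linarith
      _ = Real.exp ((w₁ + w₂ - a) * t) /
          (w₁ * t * Real.exp (w₁ * t) * (w₂ * t * Real.exp (w₂ * t))) := by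
          rw [e]
          field_simp
      _ ≤ _ := by
          apply div_le_div_of_nonneg_left (Real.exp_pos _).le (mul_pos q1 q2) u
  have e3 : -(a / (w₁ * w₂) * t⁻¹) = (1 - a * t) / (w₁ * w₂ * t ^ 2) - 1 / (w₁ * w₂ * t ^ 2) := by
    field_simp
    ring
  rw [e3]
  unfold G₂
  linarith

lemma G2_integrable (w₁ w₂ a : ℝ) (hw₁ : 0 < w₁) (hw₂ : 0 < w₂)
    (ha : (w₁ + w₂) / 2 ≤ a) (σ : ℝ) (hσ : 1 < σ) (hσ' : σ < 2) :
    IntegrableOn (fun t => G₂ a w₁ w₂ t * t ^ (σ - 1)) (Set.Ioi (0 : ℝ)) := by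
  have hmeas : Measurable (fun t => G₂ a w₁ w₂ t * t ^ (σ - 1)) := by
    unfold G₂
    fun_prop
  rw [← Set.Ioc_union_Ioi_eq_Ioi (zero_le_one' ℝ)]
  apply IntegrableOn.union
  · have hi : IntegrableOn (fun t : ℝ => a / (w₁ * w₂) * t ^ (σ - 2)) (Set.Ioc 0 1) := by
      apply Integrable.const_mul
      have := intervalIntegral.intervalIntegrable_rpow' (a := 0) (b := 1) (r := σ - 2) (by linarith)
      exact (intervalIntegrable_iff_integrableOn_Ioc_of_le zero_le_one).1 this
    refine Integrable.mono' hi hmeas.aestronglyMeasurable ?_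
    filter_upwards [ae_restrict_mem measurableSet_Ioc] with t ht
    have hp : 0 < t ^ (σ - 1) := Real.rpow_pos_of_pos ht.1 _
    have e : t ^ (σ - 2) = t⁻¹ * t ^ (σ - 1) := by
      rw [← Real.rpow_neg_one, ← Real.rpow_add ht.1]; ring_nf
    rw [norm_mul, Real.norm_eq_abs, Real.norm_eq_abs, abs_of_pos hp,
      abs_of_neg (G2_neg w₁ w₂ a t hw₁ hw₂ ha ht.1), e, ← mul_assoc]
    have := G2_ge' w₁ w₂ a t hw₁ hw₂ ht.1
    apply mul_le_mul_of_nonneg_right _ hp.le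
    linarith
  · have hi : IntegrableOn (fun t : ℝ => 1 / (w₁ * w₂) * t ^ (σ - 3)) (Set.Ioi 1) := by
      apply Integrable.const_mul
      exact integrableOn_Ioi_rpow_of_lt (by linarith) one_pos
    refine Integrable.mono' hi hmeas.aestronglyMeasurable ?_
    filter_upwards [ae_restrict_mem measurableSet_Ioi] with t ht
    have ht0 : 0 < t := one_pos.trans ht
    have hp : 0 < t ^ (σ - 1) := Real.rpow_pos_of_pos ht0 _
    have e : t ^ (σ - 3) = (t ^ 2)⁻¹ * t ^ (σ - 1) := by
      rw [← Real.rpow_natCast, ← Real.rpow_neg ht0.le, ← Real.rpow_add ht0]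
      congr 1
      push_cast
      ring
    rw [norm_mul, Real.norm_eq_abs, Real.norm_eq_abs, abs_of_pos hp,
      abs_of_neg (G2_neg w₁ w₂ a t hw₁ hw₂ ha ht0), e, ← mul_assoc]
    have := G2_ge w₁ w₂ a t hw₁ hw₂ ht0
    apply mul_le_mul_of_nonneg_right _ hp.le
    have e4 : 1 / (w₁ * w₂) * (t ^ 2)⁻¹ = 1 / (w₁ * w₂ * t ^ 2) := by field_simp
    rw [e4]
    linarith

theorem stmt1 (w₁ w₂ a : ℝ) (hw₁ : 0 < w₁) (hw₂ : 0 < w₂)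
    (ha : (w₁ + w₂) / 2 ≤ a) (σ : ℝ) (hσ : 1 < σ) (hσ' : σ < 2) :
    ∫ t in Set.Ioi (0 : ℝ), G₂ a w₁ w₂ t * t ^ (σ - 1) < 0 := by
  have hneg : ∀ t ∈ Set.Ioi (0 : ℝ), G₂ a w₁ w₂ t * t ^ (σ - 1) < 0 := fun t ht =>
    mul_neg_of_neg_of_pos (G2_neg w₁ w₂ a t hw₁ hw₂ ha ht) (Real.rpow_pos_of_pos ht _)
  have hint := G2_integrable w₁ w₂ a hw₁ hw₂ ha σ hσ hσ'
  have hpos : 0 < ∫ t in Set.Ioi (0 : ℝ), -(G₂ a w₁ w₂ t * t ^ (σ - 1)) := by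
    have hint' : IntegrableOn (fun t => -(G₂ a w₁ w₂ t * t ^ (σ - 1))) (Set.Ioi (0 : ℝ)) :=
      hint.neg
    rw [setIntegral_pos_iff_support_of_nonneg_ae _ hint']
    · have : Set.Ioi (0 : ℝ) ⊆
          (Function.support fun t => -(G₂ a w₁ w₂ t * t ^ (σ - 1))) ∩ Set.Ioi 0 := by
        intro t ht
        exact ⟨neg_ne_zero.2 (hneg t ht).ne, ht⟩
      refine lt_of_lt_of_le ?_ (measure_mono this)
      simp
    · filter_upwards [ae_restrict_mem measurableSet_Ioi] with t ht
      simpa using (hneg t ht).le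
  rw [integral_neg] at hpos
  linarith
end

section
/- Let w₁, w₂ > 0 and 0 < a < (w₁+w₂)/2, and define G₂(a,w,t) = e^{(w₁+w₂−a)t}/((e^{w₁t}−1)(e^{w₂t}−1)) − 1/(w₁w₂t²) for t > 0. Then there exists exactly one σ in the open interval (1,2) such that ∫₀^∞ G₂(a,w,t) t^{σ−1} dt = 0. -/
open MeasureTheory Real Set

/-- `log (sinh x / x)`, with value `0` at `0`. -/
noncomputable def phiAux (x : ℝ) : ℝ := Real.log (Real.sinh x / x)

lemma phiAux_zero : phiAux 0 = 0 := by simp [phiAux]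

lemma lt_sinh_aux {x : ℝ} (hx : 0 < x) : x < Real.sinh x := Real.self_lt_sinh_iff.2 hx

lemma sinh_le_mul_cosh_aux {x : ℝ} (hx : 0 < x) : Real.sinh x ≤ x * Real.cosh x := by
  have hd : ∀ y : ℝ, HasDerivAt (fun y => y * Real.cosh y - Real.sinh y) (y * Real.sinh y) y := by
    intro y
    have := ((hasDerivAt_id y).mul (Real.hasDerivAt_cosh y)).sub (Real.hasDerivAt_sinh y)
    convert! this using 1
    simp
  have hm : MonotoneOn (fun y => y * Real.cosh y - Real.sinh y) (Ici 0) := by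
    apply monotoneOn_of_deriv_nonneg (convex_Ici 0)
    · fun_prop
    · fun_prop
    · intro y hy
      rw [interior_Ici] at hy
      rw [(hd y).deriv]
      exact mul_nonneg (le_of_lt hy) (Real.sinh_nonneg_iff.2 (le_of_lt hy))
  have := hm (show (0:ℝ) ∈ Ici 0 by simp) (show x ∈ Ici 0 from hx.le) hx.le
  simp at this
  linarith

lemma phiAux_nonneg {x : ℝ} (hx : 0 ≤ x) : 0 ≤ phiAux x := by
  rcases hx.eq_or_lt with rfl | hx
  · simp [phiAux]
  · apply Real.log_nonneg
    rw [le_div_iff₀ hx]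
    linarith [lt_sinh_aux hx]

lemma phiAux_le {x : ℝ} (hx : 0 ≤ x) : phiAux x ≤ x ^ 2 / 2 := by
  rcases hx.eq_or_lt with rfl | hx
  · simp [phiAux]
  · have hs : 0 < Real.sinh x := Real.sinh_pos_iff.2 hx
    rw [phiAux, Real.log_le_iff_le_exp (by positivity)]
    rw [div_le_iff₀ hx]
    have := sinh_le_mul_cosh_aux hx
    have h2 := Real.cosh_le_exp_half_sq x
    nlinarith

lemma phiAux_hasDerivAt {x : ℝ} (hx : 0 < x) :
    HasDerivAt phiAux (Real.cosh x / Real.sinh x - 1 / x) x := by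
  have hs : 0 < Real.sinh x := Real.sinh_pos_iff.2 hx
  have := ((Real.hasDerivAt_sinh x).div (hasDerivAt_id x) hx.ne').log (by simp; exact hx.ne')
  convert! this using 1
  simp
  field_simp

lemma phiAux_continuousOn : ContinuousOn phiAux (Ici 0) := by
  intro x hx
  rcases (show (0:ℝ) ≤ x from hx).eq_or_lt with rfl | hx
  · rw [ContinuousWithinAt, phiAux_zero]
    apply tendsto_of_tendsto_of_tendsto_of_le_of_le' (g := fun _ => 0) (h := fun x => x^2/2)
    · exact tendsto_const_nhds
    · have : ContinuousWithinAt (fun x : ℝ => x^2/2) (Ici 0) 0 := by fun_prop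
      simpa [ContinuousWithinAt] using this
    · filter_upwards [self_mem_nhdsWithin] with x hx using phiAux_nonneg hx
    · filter_upwards [self_mem_nhdsWithin] with x hx using phiAux_le hx
  · exact (phiAux_hasDerivAt hx).continuousAt.continuousWithinAt

lemma phiAux_convex : StrictConvexOn ℝ (Ici 0) phiAux := by
  apply strictConvexOn_of_deriv2_pos (convex_Ici 0) phiAux_continuousOn
  intro x hx
  rw [interior_Ici] at hx
  have hx : 0 < x := hx
  have hs : 0 < Real.sinh x := Real.sinh_pos_iff.2 hx
  have h1 : deriv phiAux =ᶠ[nhds x] fun x => Real.cosh x / Real.sinh x - 1 / x := by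
    filter_upwards [Ioi_mem_nhds hx] with y hy using (phiAux_hasDerivAt hy).deriv
  have h2 := ((Real.hasDerivAt_cosh x).div (Real.hasDerivAt_sinh x) hs.ne').sub
    ((hasDerivAt_const x (1:ℝ)).div (hasDerivAt_id x) hx.ne')
  have h3 : deriv (deriv phiAux) x = 1 / x ^ 2 - 1 / Real.sinh x ^ 2 := by
    rw [h1.deriv_eq]
    refine HasDerivAt.deriv ?_
    convert! h2 using 1
    have := Real.cosh_sq x
    simp
    field_simp
    rw [this]; ring
  simp only [Function.iterate_succ, Function.iterate_zero, Function.comp, id]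
  rw [h3, sub_pos]
  exact one_div_lt_one_div_of_lt (by positivity) (by gcongr; exact lt_sinh_aux hx)

lemma phiAux_div_lt {x y : ℝ} (hx : 0 < x) (hxy : x < y) : phiAux x / x < phiAux y / y := by
  have := phiAux_convex.secant_strict_mono (a := 0) (by simp) (show x ∈ Ici 0 from hx.le)
    (show y ∈ Ici 0 from (hx.trans hxy).le) hx.ne' (hx.trans hxy).ne' hxy
  simpa [phiAux_zero] using this

lemma exp_phiAux {x : ℝ} (hx : 0 < x) : Real.exp (phiAux x) = Real.sinh x / x := by
  have hs : 0 < Real.sinh x := Real.sinh_pos_iff.2 hx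
  exact Real.exp_log (by positivity)

lemma exp_sub_one_eq (w t : ℝ) (hw : 0 < w) (ht : 0 < t) :
    Real.exp (w * t) - 1 = w * t * Real.exp (phiAux (w * t / 2)) * Real.exp (w * t / 2) := by
  rw [exp_phiAux (by positivity), Real.sinh_eq]
  have h1 : Real.exp (w * t) = Real.exp (w * t / 2) * Real.exp (w * t / 2) := by
    rw [← Real.exp_add]; ring_nf
  have h2 : Real.exp (-(w * t / 2)) * Real.exp (w * t / 2) = 1 := by
    rw [← Real.exp_add]; simp
  field_simp
  rw [h1]
  linear_combination h2

lemma integrableOn_Ioc_rpow_aux {r b : ℝ} (hb : 0 < b) (hr : -1 < r) :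
    IntegrableOn (fun t : ℝ => t ^ r) (Ioc 0 b) := by
  rw [← intervalIntegrable_iff_integrableOn_Ioc_of_le hb.le]
  exact intervalIntegral.intervalIntegrable_rpow' hr

lemma integral_Ioc_rpow_aux {r b : ℝ} (hb : 0 < b) (hr : -1 < r) :
    ∫ t in Ioc (0:ℝ) b, t ^ r = b ^ (r + 1) / (r + 1) := by
  rw [← intervalIntegral.integral_of_le hb.le, integral_rpow (Or.inl hr),
    Real.zero_rpow (by linarith), sub_zero]

lemma rpow_split_one {t σ : ℝ} (ht : 0 < t) : t ^ (σ - 1) = t * t ^ (σ - 2) := by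
  nth_rewrite 2 [← Real.rpow_one t]
  rw [← Real.rpow_add ht]; ring_nf

lemma rpow_split_two {t σ : ℝ} (ht : 0 < t) : t ^ (σ - 1) = t ^ 2 * t ^ (σ - 3) := by
  rw [← Real.rpow_natCast t 2, ← Real.rpow_add ht]; norm_num; ring_nf

theorem abstract_unique_zero (g : ℝ → ℝ) (hg : ContinuousOn g (Ioi 0))
    (A B K M t₀ t₁ t₂ : ℝ) (hK : 0 < K) (hM : 0 < M)
    (ht₁ : 0 < t₁) (h10 : t₁ ≤ t₀) (h02 : t₀ ≤ t₂)
    (hg0 : ∀ t, 0 < t → t ≤ t₀ → 0 ≤ g t)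
    (hgA : ∀ t, 0 < t → t ≤ t₀ → g t ≤ A / t)
    (hgK : ∀ t, 0 < t → t ≤ t₁ → K / t ≤ g t)
    (hg0' : ∀ t, t₀ < t → g t ≤ 0)
    (hgB : ∀ t, t₀ < t → -B / t ^ 2 ≤ g t)
    (hgM : ∀ t, t₂ < t → g t ≤ -M / t ^ 2) :
    ∃! σ : ℝ, σ ∈ Set.Ioo (1 : ℝ) 2 ∧ ∫ t in Set.Ioi (0 : ℝ), g t * t ^ (σ - 1) = 0 := by
  have ht₀ : 0 < t₀ := by linarith
  have ht₂ : 0 < t₂ := by linarith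
  have hcont : ∀ σ : ℝ, ContinuousOn (fun t => g t * t ^ (σ - 1)) (Ioi 0) := by
    intro σ
    apply hg.mul
    intro t ht
    exact (Real.continuousAt_rpow_const t _ (Or.inl (ne_of_gt ht))).continuousWithinAt
  have hmeas : ∀ σ : ℝ, AEStronglyMeasurable (fun t => g t * t ^ (σ - 1))
      (volume.restrict (Ioi 0)) := fun σ => (hcont σ).aestronglyMeasurable measurableSet_Ioi
  -- pointwise bounds
  have bA : ∀ σ t : ℝ, 0 < t → t ≤ t₀ → g t * t ^ (σ - 1) ≤ A * t ^ (σ - 2) := by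
    intro σ t h h'
    have := mul_le_mul_of_nonneg_right (hgA t h h') (Real.rpow_nonneg h.le (σ - 1))
    rw [rpow_split_one h] at this ⊢
    refine this.trans_eq ?_
    field_simp
  have bK : ∀ σ t : ℝ, 0 < t → t ≤ t₁ → K * t ^ (σ - 2) ≤ g t * t ^ (σ - 1) := by
    intro σ t h h'
    have := mul_le_mul_of_nonneg_right (hgK t h h') (Real.rpow_nonneg h.le (σ - 1))
    rw [rpow_split_one h] at this ⊢
    refine Eq.trans_le ?_ this
    field_simp
  have bB : ∀ σ t : ℝ, t₀ < t → -B * t ^ (σ - 3) ≤ g t * t ^ (σ - 1) := by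
    intro σ t h'
    have h : 0 < t := by linarith
    have := mul_le_mul_of_nonneg_right (hgB t h') (Real.rpow_nonneg h.le (σ - 1))
    rw [rpow_split_two h] at this ⊢
    refine Eq.trans_le ?_ this
    field_simp
  have bM : ∀ σ t : ℝ, t₂ < t → g t * t ^ (σ - 1) ≤ -M * t ^ (σ - 3) := by
    intro σ t h'
    have h : 0 < t := by linarith
    have := mul_le_mul_of_nonneg_right (hgM t h') (Real.rpow_nonneg h.le (σ - 1))
    rw [rpow_split_two h] at this ⊢
    refine this.trans_eq ?_
    field_simp
  have hsub1 : Ioc 0 t₀ ⊆ Ioi 0 := Ioc_subset_Ioi_self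
  have hsub2 : Ioi t₀ ⊆ Ioi 0 := Ioi_subset_Ioi ht₀.le
  have int1 : ∀ σ : ℝ, 1 < σ → IntegrableOn (fun t => g t * t ^ (σ - 1)) (Ioc 0 t₀) := by
    intro σ h1
    refine Integrable.mono' ((integrableOn_Ioc_rpow_aux (r := σ - 2) ht₀ (by linarith)).const_mul A)
      ((hmeas σ).mono_set hsub1) ?_
    refine (ae_restrict_iff' measurableSet_Ioc).2 (.of_forall fun t ht => ?_)
    rw [Real.norm_of_nonneg (mul_nonneg (hg0 t ht.1 ht.2) (Real.rpow_nonneg ht.1.le _))]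
    exact bA σ t ht.1 ht.2
  have int2 : ∀ σ : ℝ, σ < 2 → IntegrableOn (fun t => g t * t ^ (σ - 1)) (Ioi t₀) := by
    intro σ h1
    refine Integrable.mono' ((integrableOn_Ioi_rpow_of_lt (a := σ - 3) (by linarith) ht₀).const_mul B)
      ((hmeas σ).mono_set hsub2) ?_
    refine (ae_restrict_iff' measurableSet_Ioi).2 (.of_forall fun t ht => ?_)
    have ht' : 0 < t := hsub2 ht
    rw [Real.norm_of_nonpos (mul_nonpos_of_nonpos_of_nonneg (hg0' t ht) (Real.rpow_nonneg ht'.le _))]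
    linarith [bB σ t ht]
  have hun : Ioc 0 t₀ ∪ Ioi t₀ = Ioi 0 := Ioc_union_Ioi_eq_Ioi ht₀.le
  have hintegr : ∀ σ : ℝ, 1 < σ → σ < 2 → IntegrableOn (fun t => g t * t ^ (σ - 1)) (Ioi 0) := by
    intro σ h1 h2
    rw [← hun]
    exact (int1 σ h1).union (int2 σ h2)
  have hsplit : ∀ σ : ℝ, 1 < σ → σ < 2 → ∫ t in Ioi (0:ℝ), g t * t ^ (σ - 1) =
      (∫ t in Ioc 0 t₀, g t * t ^ (σ - 1)) + ∫ t in Ioi t₀, g t * t ^ (σ - 1) := by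
    intro σ h1 h2
    rw [← hun]
    exact setIntegral_union Ioc_disjoint_Ioi_same measurableSet_Ioi (int1 σ h1) (int2 σ h2)
  -- lower bound
  have lower : ∀ σ : ℝ, 1 < σ → σ < 2 →
      K * (t₁ ^ (σ - 1) / (σ - 1)) - B * (t₀ ^ (σ - 2) / (2 - σ)) ≤
        ∫ t in Ioi (0:ℝ), g t * t ^ (σ - 1) := by
    intro σ h1 h2
    rw [hsplit σ h1 h2]
    have e1 : K * (t₁ ^ (σ - 1) / (σ - 1)) ≤ ∫ t in Ioc 0 t₀, g t * t ^ (σ - 1) := by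
      calc K * (t₁ ^ (σ - 1) / (σ - 1)) = ∫ t in Ioc 0 t₁, K * t ^ (σ - 2) := by
            rw [integral_const_mul, integral_Ioc_rpow_aux ht₁ (by linarith)]; ring_nf
        _ ≤ ∫ t in Ioc 0 t₁, g t * t ^ (σ - 1) := by
            apply setIntegral_mono_on ((integrableOn_Ioc_rpow_aux ht₁ (by linarith)).const_mul K)
              ((int1 σ h1).mono_set (Ioc_subset_Ioc_right h10)) measurableSet_Ioc
            intro t ht
            exact bK σ t ht.1 ht.2
        _ ≤ _ := by
            apply setIntegral_mono_set (int1 σ h1)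
            · refine (ae_restrict_iff' measurableSet_Ioc).2 (.of_forall fun t ht => ?_)
              exact mul_nonneg (hg0 t ht.1 ht.2) (Real.rpow_nonneg ht.1.le _)
            · exact (Ioc_subset_Ioc_right h10).eventuallyLE
    have e2 : - (B * (t₀ ^ (σ - 2) / (2 - σ))) ≤ ∫ t in Ioi t₀, g t * t ^ (σ - 1) := by
      calc - (B * (t₀ ^ (σ - 2) / (2 - σ))) = ∫ t in Ioi t₀, -B * t ^ (σ - 3) := by
            rw [integral_const_mul, integral_Ioi_rpow_of_lt (by linarith) ht₀]
            rw [show σ - 3 + 1 = σ - 2 by ring, show (2 - σ) = -(σ - 2) by ring, div_neg, neg_div]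
            ring
        _ ≤ ∫ t in Ioi t₀, g t * t ^ (σ - 1) := by
            apply setIntegral_mono_on
              ((integrableOn_Ioi_rpow_of_lt (by linarith) ht₀).const_mul (-B))
              (int2 σ h2) measurableSet_Ioi
            intro t ht
            exact bB σ t ht
    linarith
  have upper : ∀ σ : ℝ, 1 < σ → σ < 2 →
        ∫ t in Ioi (0:ℝ), g t * t ^ (σ - 1) ≤
      A * (t₀ ^ (σ - 1) / (σ - 1)) - M * (t₂ ^ (σ - 2) / (2 - σ)) := by
    intro σ h1 h2
    rw [hsplit σ h1 h2]
    have e1 : ∫ t in Ioc 0 t₀, g t * t ^ (σ - 1) ≤ A * (t₀ ^ (σ - 1) / (σ - 1)) := by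
      calc _ ≤ ∫ t in Ioc 0 t₀, A * t ^ (σ - 2) := by
            apply setIntegral_mono_on (int1 σ h1)
              ((integrableOn_Ioc_rpow_aux ht₀ (by linarith)).const_mul A) measurableSet_Ioc
            intro t ht
            exact bA σ t ht.1 ht.2
        _ = _ := by
            rw [integral_const_mul, integral_Ioc_rpow_aux ht₀ (by linarith)]; ring_nf
    have e2 : ∫ t in Ioi t₀, g t * t ^ (σ - 1) ≤ - (M * (t₂ ^ (σ - 2) / (2 - σ))) := by
      calc ∫ t in Ioi t₀, g t * t ^ (σ - 1) ≤ ∫ t in Ioi t₂, g t * t ^ (σ - 1) := by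
            have := setIntegral_mono_set (s := Ioi t₂) (int2 σ h2).neg ?_
              (Ioi_subset_Ioi h02).eventuallyLE
            · simp only [Pi.neg_apply, integral_neg] at this
              linarith
            · refine (ae_restrict_iff' measurableSet_Ioi).2 (.of_forall fun t ht => ?_)
              have ht' : 0 < t := hsub2 ht
              have := mul_nonpos_of_nonpos_of_nonneg (hg0' t ht) (Real.rpow_nonneg ht'.le (σ - 1))
              simpa using this
        _ ≤ ∫ t in Ioi t₂, -M * t ^ (σ - 3) := by
            apply setIntegral_mono_on ((int2 σ h2).mono_set (Ioi_subset_Ioi h02))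
              ((integrableOn_Ioi_rpow_of_lt (by linarith) ht₂).const_mul (-M))
              measurableSet_Ioi
            intro t ht
            exact bM σ t ht
        _ = _ := by
            rw [integral_const_mul, integral_Ioi_rpow_of_lt (by linarith) ht₂]
            rw [show σ - 3 + 1 = σ - 2 by ring, show (2 - σ) = -(σ - 2) by ring, div_neg, neg_div]
            ring
    linarith
  -- points of each sign
  obtain ⟨p, hp1, hp2, hp⟩ : ∃ p : ℝ, 1 < p ∧ p < 3 / 2 ∧
      0 < ∫ t in Ioi (0:ℝ), g t * t ^ (p - 1) := by
    have hc : ContinuousAt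
        (fun σ : ℝ => K * t₁ ^ (σ - 1) - B * (t₀ ^ (σ - 2) / (2 - σ)) * (σ - 1)) 1 := by
      have h1 : ContinuousAt (fun σ : ℝ => t₁ ^ (σ - 1)) 1 :=
        (Real.continuousAt_const_rpow ht₁.ne').comp (f := fun σ : ℝ => σ - 1) (by fun_prop)
      have h2 : ContinuousAt (fun σ : ℝ => t₀ ^ (σ - 2)) 1 :=
        (Real.continuousAt_const_rpow ht₀.ne').comp (f := fun σ : ℝ => σ - 2) (by fun_prop)
      have h3 : ContinuousAt (fun σ : ℝ => t₀ ^ (σ - 2) / (2 - σ)) 1 :=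
        h2.div (by fun_prop) (by norm_num)
      fun_prop
    have hev := hc.eventually (lt_mem_nhds (a := (0:ℝ)) (by simpa using hK))
    obtain ⟨p, hp, hp'⟩ := ((hev.filter_mono nhdsWithin_le_nhds).and
      (Ioo_mem_nhdsGT (show (1:ℝ) < 3/2 by norm_num))).exists
    refine ⟨p, hp'.1, hp'.2, ?_⟩
    have hpp : 0 < p - 1 := by linarith [hp'.1]
    refine lt_of_lt_of_le ?_ (lower p hp'.1 (by linarith [hp'.2]))
    have : K * (t₁ ^ (p - 1) / (p - 1)) - B * (t₀ ^ (p - 2) / (2 - p)) =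
      (K * t₁ ^ (p - 1) - B * (t₀ ^ (p - 2) / (2 - p)) * (p - 1)) / (p - 1) := by
      rw [sub_div, mul_div_cancel_right₀ _ hpp.ne', mul_div_assoc]
    rw [this]
    exact div_pos hp hpp
  obtain ⟨q, hq1, hq2, hq⟩ : ∃ q : ℝ, 3 / 2 < q ∧ q < 2 ∧
      ∫ t in Ioi (0:ℝ), g t * t ^ (q - 1) < 0 := by
    have hc : ContinuousAt
        (fun σ : ℝ => A * (t₀ ^ (σ - 1) / (σ - 1)) * (2 - σ) - M * t₂ ^ (σ - 2)) 2 := by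
      have h1 : ContinuousAt (fun σ : ℝ => t₂ ^ (σ - 2)) 2 :=
        (Real.continuousAt_const_rpow ht₂.ne').comp (f := fun σ : ℝ => σ - 2) (by fun_prop)
      have h2 : ContinuousAt (fun σ : ℝ => t₀ ^ (σ - 1)) 2 :=
        (Real.continuousAt_const_rpow ht₀.ne').comp (f := fun σ : ℝ => σ - 1) (by fun_prop)
      have h3 : ContinuousAt (fun σ : ℝ => t₀ ^ (σ - 1) / (σ - 1)) 2 :=
        h2.div (by fun_prop) (by norm_num)
      fun_prop
    have hev := hc.eventually (gt_mem_nhds (show _ < (0:ℝ) by simpa using hM))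
    obtain ⟨p, hp, hp'⟩ := ((hev.filter_mono nhdsWithin_le_nhds).and
      (Ioo_mem_nhdsLT (show (3/2:ℝ) < 2 by norm_num))).exists
    refine ⟨p, hp'.1, hp'.2, ?_⟩
    have hpp : 0 < 2 - p := by linarith [hp'.2]
    refine lt_of_le_of_lt (upper p (by linarith [hp'.1]) hp'.2) ?_
    have : A * (t₀ ^ (p - 1) / (p - 1)) - M * (t₂ ^ (p - 2) / (2 - p)) =
      (A * (t₀ ^ (p - 1) / (p - 1)) * (2 - p) - M * t₂ ^ (p - 2)) / (2 - p) := by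
      rw [sub_div, mul_div_cancel_right₀ _ hpp.ne', mul_div_assoc]
    rw [this]
    exact div_neg_of_neg_of_pos hp hpp
  have hpq : p ≤ q := by linarith
  have hF : ContinuousOn (fun σ : ℝ => ∫ t in Ioi (0:ℝ), g t * t ^ (σ - 1)) (Icc p q) := by
    apply continuousOn_of_dominated
      (bound := fun t => ‖g t * t ^ (p - 1)‖ + ‖g t * t ^ (q - 1)‖)
    · exact fun σ _ => hmeas σ
    · intro σ hσ
      refine (ae_restrict_iff' measurableSet_Ioi).2 (.of_forall fun t ht => ?_)
      have ht : 0 < t := ht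
      simp only [norm_mul, ← mul_add]
      gcongr
      simp only [Real.norm_of_nonneg (Real.rpow_nonneg ht.le _)]
      rcases le_total t 1 with h | h
      · have := Real.rpow_le_rpow_of_exponent_ge ht h (show p - 1 ≤ σ - 1 by linarith [hσ.1])
        linarith [Real.rpow_nonneg ht.le (q - 1)]
      · have := Real.rpow_le_rpow_of_exponent_le h (show σ - 1 ≤ q - 1 by linarith [hσ.2])
        linarith [Real.rpow_nonneg ht.le (p - 1)]
    · exact (hintegr p hp1 (by linarith)).norm.add (hintegr q (by linarith) hq2).norm
    · refine (ae_restrict_iff' measurableSet_Ioi).2 (.of_forall fun t ht => ?_)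
      have ht : 0 < t := ht
      apply Continuous.continuousOn
      exact continuous_const.mul
        ((Real.continuous_const_rpow ht.ne').comp (f := fun σ : ℝ => σ - 1) (by fun_prop))
  obtain ⟨σ, hσ, hσ0⟩ := intermediate_value_Icc' hpq hF ⟨hq.le, hp.le⟩
  -- uniqueness
  have key : ∀ x y : ℝ, 1 < x → x < y → y < 2 →
      ∫ t in Ioi (0:ℝ), g t * t ^ (x - 1) = 0 → ∫ t in Ioi (0:ℝ), g t * t ^ (y - 1) = 0 →
      False := by
    intro x y hx hxy hy h0x h0y
    set f : ℝ → ℝ := fun t => g t * t ^ (x - 1) * t₀ ^ (y - x) - g t * t ^ (y - 1) with hf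
    have hfi : IntegrableOn f (Ioi 0) :=
      ((hintegr x hx (by linarith)).mul_const _).sub (hintegr y (by linarith) hy)
    have hf0 : ∫ t in Ioi (0:ℝ), f t = 0 := by
      rw [hf, integral_sub ((hintegr x hx (by linarith)).mul_const _) (hintegr y (by linarith) hy),
        integral_mul_const, h0x, h0y]
      simp
    have hfeq : ∀ t, 0 < t → f t = g t * t ^ (x - 1) * (t₀ ^ (y - x) - t ^ (y - x)) := by
      intro t ht
      have : t ^ (y - 1) = t ^ (x - 1) * t ^ (y - x) := by
        rw [← Real.rpow_add ht]; ring_nf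
      simp only [hf, this]; ring
    have hfn : ∀ t, 0 < t → 0 ≤ f t := by
      intro t ht
      rw [hfeq t ht]
      rcases le_or_gt t t₀ with h | h
      · have := Real.rpow_le_rpow ht.le h (show 0 ≤ y - x by linarith)
        exact mul_nonneg (mul_nonneg (hg0 t ht h) (Real.rpow_nonneg ht.le _)) (by linarith)
      · have := Real.rpow_le_rpow ht₀.le h.le (show 0 ≤ y - x by linarith)
        exact mul_nonneg_of_nonpos_of_nonpos
          (mul_nonpos_of_nonpos_of_nonneg (hg0' t h) (Real.rpow_nonneg ht.le _)) (by linarith)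
    have hfp : ∀ t, t₂ < t → 0 < f t := by
      intro t h
      have ht : 0 < t := by linarith
      rw [hfeq t ht]
      have h1 := Real.rpow_lt_rpow ht₀.le (show t₀ < t by linarith) (show 0 < y - x by linarith)
      have h2 : g t < 0 := lt_of_le_of_lt (hgM t h) (div_neg_of_neg_of_pos (by linarith) (by positivity))
      exact mul_pos_of_neg_of_neg (mul_neg_of_neg_of_pos h2 (Real.rpow_pos_of_pos ht _))
        (by linarith)
    have hpos : 0 < ∫ t in Ioi (0:ℝ), f t := by
      rw [setIntegral_pos_iff_support_of_nonneg_ae _ hfi]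
      · refine lt_of_lt_of_le ?_ (measure_mono (show Ioi t₂ ⊆ _ from ?_))
        · simp
        · intro t ht
          exact ⟨(hfp t ht).ne', lt_trans ht₂ ht⟩
      · exact (ae_restrict_iff' measurableSet_Ioi).2 (.of_forall fun t ht => hfn t ht)
    linarith
  refine ⟨σ, ⟨⟨by linarith [hσ.1], by linarith [hσ.2]⟩, hσ0⟩, ?_⟩
  rintro τ ⟨⟨h1, h2⟩, h3⟩
  rcases lt_trichotomy τ σ with h | h | h
  · exact (key τ σ h1 h (by linarith [hσ.2]) h3 hσ0).elim
  · exact h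
  · exact (key σ τ (by linarith [hσ.1]) h h2 hσ0 h3).elim

theorem stmt2 (w₁ w₂ a : ℝ) (hw₁ : 0 < w₁) (hw₂ : 0 < w₂)
    (ha : 0 < a) (ha' : a < (w₁ + w₂) / 2) :
    ∃! σ : ℝ, σ ∈ Set.Ioo (1 : ℝ) 2 ∧
      ∫ t in Set.Ioi (0 : ℝ), G₂ a w₁ w₂ t * t ^ (σ - 1) = 0 := by
  obtain ⟨c, hc⟩ : ∃ c, c = (w₁ + w₂) / 2 - a := ⟨_, rfl⟩
  have hc0 : 0 < c := by linarith
  have hW : 0 < w₁ * w₂ := by positivity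
  set E : ℝ → ℝ := fun t => c * t - phiAux (w₁ * t / 2) - phiAux (w₂ * t / 2) with hE
  have hG : ∀ t, 0 < t → G₂ a w₁ w₂ t = (Real.exp (E t) - 1) / (w₁ * w₂ * t ^ 2) := by
    intro t ht
    rw [G₂, exp_sub_one_eq w₁ t hw₁ ht, exp_sub_one_eq w₂ t hw₂ ht, sub_div]
    congr 1
    have : Real.exp ((w₁ + w₂ - a) * t) = Real.exp (E t) * (Real.exp (phiAux (w₁ * t / 2)) *
        Real.exp (w₁ * t / 2)) * (Real.exp (phiAux (w₂ * t / 2)) * Real.exp (w₂ * t / 2)) := by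
      simp only [← Real.exp_add, hE, hc]
      ring_nf
    rw [this]
    field_simp
  have hEc : ContinuousOn E (Ici 0) := by
    have h : ∀ w : ℝ, 0 < w → ContinuousOn (fun t => phiAux (w * t / 2)) (Ici 0) := by
      intro w hw
      refine phiAux_continuousOn.comp (by fun_prop) ?_
      intro t ht
      have ht : 0 ≤ t := ht
      show 0 ≤ w * t / 2
      positivity
    exact ((by fun_prop : ContinuousOn (fun t : ℝ => c * t) (Ici 0)).sub (h w₁ hw₁)).sub (h w₂ hw₂)
  -- the slope `E t / t` is strictly decreasing
  have hanti : ∀ s t, 0 < s → s < t → E t / t < E s / s := by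
    intro s t hs hst
    have ht : 0 < t := hs.trans hst
    have h : ∀ w : ℝ, 0 < w → phiAux (w * s / 2) / s < phiAux (w * t / 2) / t := by
      intro w hw
      have := phiAux_div_lt (x := w * s / 2) (y := w * t / 2) (by positivity) (by gcongr)
      have h1 : phiAux (w * s / 2) / s = phiAux (w * s / 2) / (w * s / 2) * (w / 2) := by
        field_simp
      have h2 : phiAux (w * t / 2) / t = phiAux (w * t / 2) / (w * t / 2) * (w / 2) := by
        field_simp
      rw [h1, h2]
      gcongr
    have h1 := h w₁ hw₁
    have h2 := h w₂ hw₂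
    simp only [hE, sub_div, mul_div_cancel_right₀ _ hs.ne', mul_div_cancel_right₀ _ ht.ne']
    linarith
  have hEle : ∀ t, 0 < t → E t ≤ c * t := by
    intro t ht
    have h1 := phiAux_nonneg (x := w₁ * t / 2) (by positivity)
    have h2 := phiAux_nonneg (x := w₂ * t / 2) (by positivity)
    simp only [hE]; linarith
  -- small t
  obtain ⟨t₁, ht₁, hEt₁⟩ : ∃ t₁, 0 < t₁ ∧ c / 2 ≤ E t₁ / t₁ := by
    have hD : 0 < w₁ ^ 2 + w₂ ^ 2 := by positivity
    refine ⟨4 * c / (w₁ ^ 2 + w₂ ^ 2), by positivity, ?_⟩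
    set t := 4 * c / (w₁ ^ 2 + w₂ ^ 2) with htdef
    have ht : 0 < t := by positivity
    have h1 := phiAux_le (x := w₁ * t / 2) (by positivity)
    have h2 := phiAux_le (x := w₂ * t / 2) (by positivity)
    have h3 : t * (w₁ ^ 2 + w₂ ^ 2) = 4 * c := by rw [htdef]; field_simp
    rw [le_div_iff₀ ht]
    simp only [hE]
    have h4 : (w₁ * t / 2) ^ 2 / 2 + (w₂ * t / 2) ^ 2 / 2 = c / 2 * t := by
      linear_combination t / 8 * h3
    linarith
  -- large t
  obtain ⟨t₂, ht₂, hEt₂⟩ : ∃ t₂, t₁ < t₂ ∧ E t₂ < 0 := by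
    have l1 := tendsto_rpow_mul_exp_neg_mul_atTop_nhds_zero 2 a ha
    have lw : ∀ w : ℝ, 0 < w →
        Filter.Tendsto (fun t : ℝ => Real.exp (-w * t)) Filter.atTop (nhds 0) := by
      intro w hw
      have := tendsto_rpow_mul_exp_neg_mul_atTop_nhds_zero 0 w hw
      simpa using this
    have l2 : Filter.Tendsto (fun t : ℝ => (1 - Real.exp (-w₁ * t)) * (1 - Real.exp (-w₂ * t))
        - w₁ * w₂ * (t ^ (2:ℝ) * Real.exp (-a * t))) Filter.atTop
        (nhds ((1 - 0) * (1 - 0) - w₁ * w₂ * 0)) :=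
      ((tendsto_const_nhds.sub (lw w₁ hw₁)).mul (tendsto_const_nhds.sub (lw w₂ hw₂))).sub
        (l1.const_mul _)
    have l3 := l2.eventually (lt_mem_nhds (a := (0:ℝ)) (by norm_num))
    obtain ⟨t, h, h'⟩ := (l3.and (Filter.eventually_gt_atTop t₁)).exists
    refine ⟨t, h', ?_⟩
    have ht : 0 < t := ht₁.trans h'
    have hG0 : G₂ a w₁ w₂ t < 0 := by
      have p1 : 0 < Real.exp (w₁ * t) - 1 := by
        rw [sub_pos, Real.one_lt_exp_iff]; positivity
      have p2 : 0 < Real.exp (w₂ * t) - 1 := by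
        rw [sub_pos, Real.one_lt_exp_iff]; positivity
      rw [G₂, sub_neg, div_lt_div_iff₀ (by positivity) (by positivity)]
      have e1 : Real.exp (w₁ * t) * Real.exp (-w₁ * t) = 1 := by rw [← Real.exp_add]; simp
      have e2 : Real.exp (w₂ * t) * Real.exp (-w₂ * t) = 1 := by rw [← Real.exp_add]; simp
      have e3 : Real.exp ((w₁ + w₂ - a) * t) =
          Real.exp (w₁ * t) * Real.exp (w₂ * t) * Real.exp (-a * t) := by
        simp only [← Real.exp_add]; ring_nf
      rw [Real.rpow_two] at h
      have := mul_pos (mul_pos (Real.exp_pos (w₁ * t)) (Real.exp_pos (w₂ * t))) h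
      rw [e3]
      have e4 : (Real.exp (w₁ * t) - 1) * (Real.exp (w₂ * t) - 1) =
          Real.exp (w₁ * t) * Real.exp (w₂ * t) *
            ((1 - Real.exp (-w₁ * t)) * (1 - Real.exp (-w₂ * t))) := by
        linear_combination (-(Real.exp (w₂ * t)) * (-1 + Real.exp (-w₂ * t))) * e1 + (Real.exp (w₁ * t) - 1) * e2
      rw [one_mul, e4]
      linarith
    rw [hG t ht] at hG0
    by_contra hcon
    have : 0 ≤ Real.exp (E t) - 1 := by
      have := Real.add_one_le_exp (E t)
      linarith
    have : 0 ≤ (Real.exp (E t) - 1) / (w₁ * w₂ * t ^ 2) := by positivity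
    linarith
  have ht₂0 : 0 < t₂ := ht₁.trans ht₂
  have hEt₁' : 0 ≤ E t₁ := by
    rw [le_div_iff₀ ht₁] at hEt₁
    have : 0 < c / 2 * t₁ := by positivity
    linarith
  obtain ⟨t₀, ht₀, hEt₀⟩ : ∃ t₀ ∈ Icc t₁ t₂, E t₀ = 0 :=
    intermediate_value_Icc' ht₂.le (hEc.mono fun t ht => ht₁.le.trans ht.1) ⟨hEt₂.le, hEt₁'⟩
  have ht₀0 : 0 < t₀ := ht₁.trans_le ht₀.1
  have hpos : ∀ t, 0 < t → t ≤ t₀ → 0 ≤ E t := by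
    intro t ht h
    rcases h.eq_or_lt with rfl | h
    · exact hEt₀.ge
    · have := hanti t t₀ ht h
      rw [hEt₀, zero_div] at this
      exact ((div_pos_iff_of_pos_right ht).1 this).le
  have hneg : ∀ t, t₀ < t → E t ≤ 0 := by
    intro t h
    have := hanti t₀ t ht₀0 h
    rw [hEt₀, zero_div] at this
    rw [div_lt_iff₀ (ht₀0.trans h), zero_mul] at this
    exact this.le
  have hGc : ContinuousOn (G₂ a w₁ w₂) (Ioi 0) := by
    have : ContinuousOn (fun t => (Real.exp (E t) - 1) / (w₁ * w₂ * t ^ 2)) (Ioi 0) := by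
      refine ContinuousOn.div ?_ (by fun_prop) ?_
      · exact ((hEc.mono Ioi_subset_Ici_self).rexp).sub continuousOn_const
      · intro t ht
        have ht : 0 < t := ht
        positivity
    exact this.congr fun t ht => hG t ht
  refine abstract_unique_zero (G₂ a w₁ w₂) hGc (c * Real.exp (c * t₀) / (w₁ * w₂)) (1 / (w₁ * w₂))
    (c / 2 / (w₁ * w₂)) ((1 - Real.exp (E t₂)) / (w₁ * w₂)) t₀ t₁ t₂ (by positivity)
    (div_pos (by rw [sub_pos, Real.exp_lt_one_iff]; exact hEt₂) hW) ht₁ ht₀.1 ht₀.2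
    ?_ ?_ ?_ ?_ ?_ ?_
  · intro t ht h
    rw [hG t ht]
    have := Real.add_one_le_exp (E t)
    have := hpos t ht h
    exact div_nonneg (by linarith) (by positivity)
  · intro t ht h
    rw [hG t ht, div_div, div_le_div_iff₀ (by positivity) (by positivity)]
    have h1 : Real.exp (E t) - 1 ≤ E t * Real.exp (E t) := by
      have h2 := Real.add_one_le_exp (-E t)
      have h3 : Real.exp (-E t) * Real.exp (E t) = 1 := by rw [← Real.exp_add]; simp
      nlinarith [Real.exp_pos (E t)]
    have h2 : E t * Real.exp (E t) ≤ c * t * Real.exp (c * t₀) := by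
      have h3 := hEle t ht
      have h4 : E t ≤ c * t₀ := h3.trans (by gcongr)
      have := hpos t ht h
      gcongr
    have h3 := mul_le_mul_of_nonneg_right (h1.trans h2) (show 0 ≤ w₁ * w₂ * t by positivity)
    linarith
  · intro t ht h
    rw [hG t ht, div_div, div_le_div_iff₀ (by positivity) (by positivity)]
    have h0 : c / 2 * t ≤ E t := by
      rw [← le_div_iff₀ ht]
      rcases h.eq_or_lt with rfl | h
      · exact hEt₁
      · exact hEt₁.trans (hanti t t₁ ht h).le
    have h1 := Real.add_one_le_exp (E t)
    have h3 := mul_le_mul_of_nonneg_right (show c / 2 * t ≤ Real.exp (E t) - 1 by linarith)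
      (show 0 ≤ w₁ * w₂ * t by positivity)
    linarith
  · intro t h
    rw [hG t (ht₀0.trans h)]
    have := Real.exp_le_one_iff.2 (hneg t h)
    exact div_nonpos_of_nonpos_of_nonneg (by linarith) (by positivity)
  · intro t h
    have ht := ht₀0.trans h
    rw [hG t ht, ← neg_div, div_div]
    have := Real.exp_pos (E t)
    gcongr
    linarith
  · intro t h
    have ht := ht₂0.trans h
    rw [hG t ht, ← neg_div, div_div]
    have h1 : E t ≤ E t₂ := by
      have := hanti t₂ t ht₂0 h
      rw [div_lt_div_iff₀ ht ht₂0] at this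
      nlinarith
    have h2 := Real.exp_le_exp.2 h1
    gcongr
    linarith
end

section
/- Let w₁, w₂, a > 0 and let s ∈ ℂ with Re(s) > 2. Then Γ(s) · Σ_{m₁=0}^∞ Σ_{m₂=0}^∞ (a + m₁w₁ + m₂w₂)^{−s} = ∫₀^∞ e^{(w₁+w₂−a)t}/((e^{w₁t}−1)(e^{w₂t}−1)) · t^{s−1} dt. -/
open MeasureTheory Real Set Complex

lemma barnes_summable (w₁ w₂ a : ℝ) (hw₁ : 0 < w₁) (hw₂ : 0 < w₂) (ha : 0 < a)
    (σ : ℝ) (hs : 2 < σ) :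
    Summable fun i : ℕ × ℕ ↦ 1 / (a + i.1 * w₁ + i.2 * w₂) ^ σ := by
  obtain ⟨c, hc, hca, hc1, hc2⟩ : ∃ c : ℝ, 0 < c ∧ 2 * c ≤ a ∧ c ≤ w₁ ∧ c ≤ w₂ :=
    ⟨min (a / 2) (min w₁ w₂), by positivity,
      by linarith [min_le_left (a / 2) (min w₁ w₂)],
      (min_le_right _ _).trans (min_le_left _ _), (min_le_right _ _).trans (min_le_right _ _)⟩
  have h1 : Summable fun n : ℕ ↦ 1 / ((n : ℝ) + 1) ^ (σ / 2) := by
    have := (summable_nat_add_iff 1).2 (Real.summable_one_div_nat_rpow (p := σ / 2) |>.2 (by linarith))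
    simpa using this
  have h2 := (h1.mul_of_nonneg h1 (fun n ↦ by positivity) (fun n ↦ by positivity)).mul_left
    (1 / c ^ σ)
  refine Summable.of_nonneg_of_le (fun i ↦ by positivity) (fun i ↦ ?_) h2
  obtain ⟨m, n⟩ := i
  have hm : (0 : ℝ) ≤ m := by positivity
  have hn : (0 : ℝ) ≤ n := by positivity
  simp only
  rw [div_mul_div_comm, div_mul_div_comm, one_mul, one_mul]
  apply one_div_le_one_div_of_le (by positivity)
  rw [← Real.mul_rpow (by positivity) (by positivity)]
  have e : c ^ σ = (c ^ 2) ^ (σ / 2) := by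
    rw [← Real.rpow_natCast, ← Real.rpow_mul hc.le]; congr 1; push_cast; ring
  have e' : (a + m * w₁ + n * w₂) ^ σ = ((a + m * w₁ + n * w₂) ^ 2) ^ (σ / 2) := by
    rw [← Real.rpow_natCast, ← Real.rpow_mul (by positivity)]; congr 1; push_cast; ring
  rw [e, e', ← Real.mul_rpow (by positivity) (by positivity)]
  apply Real.rpow_le_rpow (by positivity) _ (by linarith)
  have h3 : c * ((m + 1) + (n + 1)) ≤ a + m * w₁ + n * w₂ := by
    nlinarith [mul_le_mul_of_nonneg_left hc1 hm, mul_le_mul_of_nonneg_left hc2 hn]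
  have h4 := pow_le_pow_left₀ (by positivity) h3 2
  refine le_trans ?_ h4
  rw [mul_pow]
  gcongr
  nlinarith [mul_nonneg hm hn]

lemma barnes_hasSum (w₁ w₂ a : ℝ) (hw₁ : 0 < w₁) (hw₂ : 0 < w₂) (t : ℝ) (ht : 0 < t) :
    HasSum (fun i : ℕ × ℕ ↦ rexp (-(a + i.1 * w₁ + i.2 * w₂) * t))
      (rexp ((w₁ + w₂ - a) * t) / ((rexp (w₁ * t) - 1) * (rexp (w₂ * t) - 1))) := by
  have g (w : ℝ) (hw : 0 < w) : HasSum (fun n : ℕ ↦ rexp (-(w * t)) ^ n)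
      (rexp (w * t) / (rexp (w * t) - 1)) := by
    have hlt : rexp (-(w * t)) < 1 := Real.exp_lt_one_iff.2 (by have := mul_pos hw ht; linarith)
    convert! hasSum_geometric_of_lt_one (Real.exp_pos _).le hlt using 1
    have : 1 < rexp (w * t) := Real.one_lt_exp_iff.2 (mul_pos hw ht)
    have h : rexp (w * t) - 1 ≠ 0 := by linarith
    rw [Real.exp_neg, inv_eq_one_div (rexp (w * t)), one_sub_div (Real.exp_pos _).ne', inv_div]
  have h := ((g w₁ hw₁).mul (g w₂ hw₂) ((g w₁ hw₁).summable.mul_of_nonneg (g w₂ hw₂).summable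
    (fun n ↦ by positivity) (fun n ↦ by positivity))).mul_left (rexp (-(a * t)))
  convert! h using 1
  · ext i
    rw [← Real.exp_nat_mul, ← Real.exp_nat_mul, ← Real.exp_add, ← Real.exp_add]
    congr 1; ring
  · rw [div_mul_div_comm, ← mul_div_assoc, ← Real.exp_add, ← Real.exp_add]
    congr 2; ring

theorem stmt3 (w₁ w₂ a : ℝ) (hw₁ : 0 < w₁) (hw₂ : 0 < w₂) (ha : 0 < a)
    (s : ℂ) (hs : 2 < s.re) :
    Complex.Gamma s *
        ∑' m₁ : ℕ, ∑' m₂ : ℕ,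
          ((a + m₁ * w₁ + m₂ * w₂ : ℝ) : ℂ) ^ (-s) =
      ∫ t in Set.Ioi (0 : ℝ),
        (Real.exp ((w₁ + w₂ - a) * t) /
            ((Real.exp (w₁ * t) - 1) * (Real.exp (w₂ * t) - 1)) : ℂ) *
          (t : ℂ) ^ (s - 1) := by
  have hpos (i : ℕ × ℕ) : 0 < a + i.1 * w₁ + i.2 * w₂ := by positivity
  have hsum := barnes_summable w₁ w₂ a hw₁ hw₂ ha s.re hs
  have key := hasSum_mellin (a := fun _ : ℕ × ℕ ↦ (1 : ℂ))
    (p := fun i ↦ a + i.1 * w₁ + i.2 * w₂)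
    (F := fun t ↦ ((rexp ((w₁ + w₂ - a) * t) /
      ((rexp (w₁ * t) - 1) * (rexp (w₂ * t) - 1)) : ℝ) : ℂ)) (s := s)
    (fun i ↦ Or.inr (hpos i)) (by linarith)
    (fun t ht ↦ by
      simp only [one_mul]
      exact Complex.hasSum_ofReal.2 (barnes_hasSum w₁ w₂ a hw₁ hw₂ t ht))
    (by simpa using hsum)
  have hS : Summable fun i : ℕ × ℕ ↦ ((a + i.1 * w₁ + i.2 * w₂ : ℝ) : ℂ) ^ (-s) := by
    refine Summable.of_norm (hsum.congr fun i ↦ ?_)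
    rw [Complex.norm_cpow_eq_rpow_re_of_pos (hpos i), Complex.neg_re, Real.rpow_neg (hpos i).le,
      one_div]
  rw [← hS.tsum_prod, ← tsum_mul_left]
  have := key.tsum_eq
  simp only [mellin, smul_eq_mul] at this
  convert! this using 1
  · refine tsum_congr fun i ↦ ?_
    rw [Complex.cpow_neg, mul_one, div_eq_mul_inv]
  · refine setIntegral_congr_fun measurableSet_Ioi fun t _ ↦ ?_
    push_cast
    ring
end

section
/- Let w₁, w₂, a > 0 and let s ∈ ℂ with Re(s) > 2. Then the double series Σ_{m₁=0}^∞ Σ_{m₂=0}^∞ (a + m₁w₁ + m₂w₂)^{−s} converges absolutely, i.e., the family ((a + m₁w₁ + m₂w₂)^{−s})_{(m₁,m₂)∈ℕ×ℕ} is summable. -/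
open MeasureTheory Real Set Complex

theorem stmt4 (w₁ w₂ a : ℝ) (hw₁ : 0 < w₁) (hw₂ : 0 < w₂) (ha : 0 < a)
    (s : ℂ) (hs : 2 < s.re) :
    Summable (fun p : ℕ × ℕ =>
      ((a + p.1 * w₁ + p.2 * w₂ : ℝ) : ℂ) ^ (-s)) := by
  have h1 : Summable (fun n : ℕ => ((n : ℝ) + 1) ^ (-(s.re / 2))) := by
    have h := (summable_nat_add_iff 1).mpr
      (Real.summable_nat_rpow.mpr (by linarith : -(s.re / 2) < -1))
    simpa using h
  have h2 := (h1.mul_of_nonneg h1 (fun n => by positivity) (fun n => by positivity))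
  obtain ⟨c, hc, hca, hc1, hc2⟩ : ∃ c : ℝ, 0 < c ∧ 2 * c ≤ a ∧ c ≤ w₁ ∧ c ≤ w₂ := by
    refine ⟨min (a / 2) (min w₁ w₂), by positivity, ?_, ?_, ?_⟩
    · have := min_le_left (a / 2) (min w₁ w₂)
      linarith
    · exact (min_le_right _ _).trans (min_le_left _ _)
    · exact (min_le_right _ _).trans (min_le_right _ _)
  refine Summable.of_norm_bounded (h2.mul_left (c ^ (-s.re))) ?_
  rintro ⟨m, n⟩
  have hpos : 0 < a + m * w₁ + n * w₂ := by positivity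
  simp only
  rw [Complex.norm_cpow_eq_rpow_re_of_pos hpos, Complex.neg_re]
  have hm : (0 : ℝ) ≤ m := Nat.cast_nonneg m
  have hn : (0 : ℝ) ≤ n := Nat.cast_nonneg n
  have hP : (0 : ℝ) < ((m : ℝ) + 1) * (n + 1) := by positivity
  have hsq : √(((m : ℝ) + 1) * (n + 1)) ≤ (m + 1) + (n + 1) := by
    rw [Real.sqrt_le_left (by positivity)]
    nlinarith [mul_nonneg hm hn]
  have hle : c * √(((m : ℝ) + 1) * (n + 1)) ≤ a + m * w₁ + n * w₂ := by
    have e1 := mul_le_mul_of_nonneg_left hsq hc.le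
    have e2 := mul_le_mul_of_nonneg_left hc1 hm
    have e3 := mul_le_mul_of_nonneg_left hc2 hn
    linarith
  have hsp : 0 < √(((m : ℝ) + 1) * (n + 1)) := Real.sqrt_pos.mpr hP
  refine (Real.rpow_le_rpow_of_nonpos (by positivity) hle (by linarith)).trans (le_of_eq ?_)
  rw [Real.mul_rpow hc.le hsp.le, Real.sqrt_eq_rpow, ← Real.rpow_mul hP.le,
    ← Real.mul_rpow (by positivity) (by positivity)]
  congr 2
  ring
end

section
/- Let w₁, w₂, a > 0 and define G₂(a,w,t) = e^{(w₁+w₂−a)t}/((e^{w₁t}−1)(e^{w₂t}−1)) − 1/(w₁w₂t²) for t > 0. Then for every real σ with 1 < σ < 2, the function t ↦ G₂(a,w,t) t^{σ−1} is (Lebesgue) integrable on (0,∞). -/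
open MeasureTheory Real Set

lemma h_bounds (x : ℝ) (hx : 0 < x) :
    1 / x ≤ Real.exp x / (Real.exp x - 1) ∧ Real.exp x / (Real.exp x - 1) ≤ 1 / x + 1 := by
  have h1 := Real.add_one_lt_exp hx.ne'
  have h2 := Real.add_one_le_exp (-x)
  have h3 : Real.exp x * Real.exp (-x) = 1 := by rw [← Real.exp_add]; simp
  have hp : 0 < Real.exp x - 1 := by linarith
  have he := Real.exp_pos x
  constructor
  · rw [div_le_div_iff₀ hx hp]
    nlinarith
  · have : 1 / x + 1 = (1 + x) / x := by field_simp
    rw [this, div_le_div_iff₀ hp hx]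
    nlinarith

lemma G₂_eq (a w₁ w₂ t : ℝ) :
    G₂ a w₁ w₂ t = Real.exp (-a * t) * ((Real.exp (w₁ * t) / (Real.exp (w₁ * t) - 1)) *
      (Real.exp (w₂ * t) / (Real.exp (w₂ * t) - 1))) - 1 / (w₁ * w₂ * t ^ 2) := by
  unfold G₂
  rw [show (w₁ + w₂ - a) * t = -a * t + (w₁ * t + w₂ * t) by ring, Real.exp_add, Real.exp_add]
  rw [div_mul_div_comm, mul_div_assoc]

lemma prod_bounds (w₁ w₂ t : ℝ) (hw₁ : 0 < w₁) (hw₂ : 0 < w₂) (ht : 0 < t) :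
    1 / (w₁ * t) * (1 / (w₂ * t)) ≤ (Real.exp (w₁ * t) / (Real.exp (w₁ * t) - 1)) *
      (Real.exp (w₂ * t) / (Real.exp (w₂ * t) - 1)) ∧
    (Real.exp (w₁ * t) / (Real.exp (w₁ * t) - 1)) *
      (Real.exp (w₂ * t) / (Real.exp (w₂ * t) - 1)) ≤
      (1 / (w₁ * t) + 1) * (1 / (w₂ * t) + 1) := by
  obtain ⟨l1, u1⟩ := h_bounds (w₁ * t) (by positivity)
  obtain ⟨l2, u2⟩ := h_bounds (w₂ * t) (by positivity)
  have p1 : 0 < 1 / (w₁ * t) := by positivity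
  have p2 : 0 < 1 / (w₂ * t) := by positivity
  exact ⟨mul_le_mul l1 l2 p2.le (p1.le.trans l1),
    mul_le_mul u1 u2 (p2.le.trans l2) (by positivity)⟩

theorem stmt5 (w₁ w₂ a : ℝ) (hw₁ : 0 < w₁) (hw₂ : 0 < w₂) (ha : 0 < a)
    (σ : ℝ) (hσ : 1 < σ) (hσ' : σ < 2) :
    MeasureTheory.IntegrableOn (fun t : ℝ => G₂ a w₁ w₂ t * t ^ (σ - 1))
      (Set.Ioi (0 : ℝ)) := by
  have hm : Measurable (fun t : ℝ => G₂ a w₁ w₂ t * t ^ (σ - 1)) := by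
    unfold G₂; fun_prop
  rw [← Ioc_union_Ioi_eq_Ioi (zero_le_one' ℝ), integrableOn_union]
  constructor
  · have hI : IntegrableOn (fun t : ℝ => (1 / w₁ + 1 / w₂ + 1 + a / (w₁ * w₂)) * t ^ (σ - 2))
        (Ioc 0 1) := by
      have := (intervalIntegral.intervalIntegrable_rpow' (a := 0) (b := 1)
        (r := σ - 2) (by linarith))
      exact ((intervalIntegrable_iff_integrableOn_Ioc_of_le zero_le_one).1 this).const_mul _
    refine Integrable.mono' hI hm.aestronglyMeasurable ?_
    refine (ae_restrict_iff' measurableSet_Ioc).2 (Filter.Eventually.of_forall fun t ht => ?_)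
    obtain ⟨ht, ht1⟩ := ht
    have hpos : 0 < t ^ (σ - 1) := Real.rpow_pos_of_pos ht _
    have hs : t ^ (σ - 2) = t ^ (σ - 1) / t := by
      rw [show σ - 2 = (σ - 1) - 1 by ring, Real.rpow_sub_one ht.ne']
    rw [norm_mul, Real.norm_eq_abs, Real.norm_eq_abs, abs_of_pos hpos, hs,
      mul_div_assoc', mul_div_right_comm]
    refine mul_le_mul_of_nonneg_right ?_ hpos.le
    obtain ⟨l, u⟩ := prod_bounds w₁ w₂ t hw₁ hw₂ ht
    rw [G₂_eq]
    set P := (Real.exp (w₁ * t) / (Real.exp (w₁ * t) - 1)) *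
      (Real.exp (w₂ * t) / (Real.exp (w₂ * t) - 1))
    have hP : 0 ≤ P := le_trans (by positivity) l
    have e1 : Real.exp (-a * t) ≤ 1 := Real.exp_le_one_iff.2 (by nlinarith)
    have e2 : 1 - a * t ≤ Real.exp (-a * t) := by
      have := Real.add_one_le_exp (-a * t); linarith
    have q1 : (1 / (w₁ * t) + 1) * (1 / (w₂ * t) + 1) - 1 / (w₁ * w₂ * t ^ 2)
        = (1 / w₁ + 1 / w₂) / t + 1 := by field_simp; ring
    have q2 : (1 - a * t) * (1 / (w₁ * t) * (1 / (w₂ * t))) - 1 / (w₁ * w₂ * t ^ 2)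
        = - (a / (w₁ * w₂) / t) := by field_simp; ring
    have q3 : (1 / w₁ + 1 / w₂ + 1 + a / (w₁ * w₂)) / t
        = (1 / w₁ + 1 / w₂) / t + 1 / t + a / (w₁ * w₂) / t := by ring
    have q4 : 1 ≤ 1 / t := by rw [le_div_iff₀ ht]; linarith
    have q5 : 0 ≤ (1 / w₁ + 1 / w₂) / t := by positivity
    have q6 : 0 ≤ a / (w₁ * w₂) / t := by positivity
    have r1 : Real.exp (-a * t) * P ≤ P := mul_le_of_le_one_left hP e1
    have r2 : Real.exp (-a * t) * (1 / (w₁ * t) * (1 / (w₂ * t))) ≤ Real.exp (-a * t) * P :=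
      mul_le_mul_of_nonneg_left l (Real.exp_pos _).le
    have r3 : (1 - a * t) * (1 / (w₁ * t) * (1 / (w₂ * t))) ≤
        Real.exp (-a * t) * (1 / (w₁ * t) * (1 / (w₂ * t))) :=
      mul_le_mul_of_nonneg_right e2 (by positivity)
    rw [abs_le, q3]
    constructor <;> linarith
  · have hI1 : IntegrableOn (fun t : ℝ => t ^ (σ - 1) * Real.exp (-a * t)) (Ioi 1) := by
      have := integrableOn_rpow_mul_exp_neg_mul_rpow (p := 1) (s := σ - 1) (b := a)
        (by linarith) one_pos ha
      simp only [Real.rpow_one] at this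
      exact this.mono_set (Ioi_subset_Ioi zero_le_one)
    have hI2 : IntegrableOn (fun t : ℝ => t ^ (σ - 3)) (Ioi 1) :=
      integrableOn_Ioi_rpow_of_lt (by linarith) one_pos
    refine Integrable.mono' ((hI1.const_mul ((1 / w₁ + 1) * (1 / w₂ + 1))).add
      (hI2.const_mul (1 / (w₁ * w₂)))) hm.aestronglyMeasurable ?_
    refine (ae_restrict_iff' measurableSet_Ioi).2 (Filter.Eventually.of_forall fun t ht1 => ?_)
    have ht1 : 1 < t := ht1
    have ht : 0 < t := by linarith
    have hpos : 0 < t ^ (σ - 1) := Real.rpow_pos_of_pos ht _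
    have hs : t ^ (σ - 3) = t ^ (σ - 1) / t ^ 2 := by
      rw [show σ - 3 = (σ - 1) - (2 : ℕ) by push_cast; ring, Real.rpow_sub_natCast ht.ne']
    simp only [Pi.add_apply]
    rw [norm_mul, Real.norm_eq_abs, Real.norm_eq_abs, abs_of_pos hpos, hs]
    have hq : (1 / w₁ + 1) * (1 / w₂ + 1) * (t ^ (σ - 1) * Real.exp (-a * t)) +
        1 / (w₁ * w₂) * (t ^ (σ - 1) / t ^ 2) =
        (Real.exp (-a * t) * ((1 / w₁ + 1) * (1 / w₂ + 1)) + 1 / (w₁ * w₂ * t ^ 2))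
          * t ^ (σ - 1) := by field_simp
    rw [hq]
    refine mul_le_mul_of_nonneg_right ?_ hpos.le
    obtain ⟨l, u⟩ := prod_bounds w₁ w₂ t hw₁ hw₂ ht
    rw [G₂_eq]
    set P := (Real.exp (w₁ * t) / (Real.exp (w₁ * t) - 1)) *
      (Real.exp (w₂ * t) / (Real.exp (w₂ * t) - 1))
    have hP : 0 ≤ P := le_trans (by positivity) l
    have s1 : 1 / (w₁ * t) ≤ 1 / w₁ := one_div_le_one_div_of_le hw₁ (by nlinarith)
    have s2 : 1 / (w₂ * t) ≤ 1 / w₂ := one_div_le_one_div_of_le hw₂ (by nlinarith)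
    have u' : P ≤ (1 / w₁ + 1) * (1 / w₂ + 1) := u.trans (by gcongr)
    have r := mul_le_mul_of_nonneg_left u' (Real.exp_pos (-a * t)).le
    have r0 : 0 ≤ Real.exp (-a * t) * P := by positivity
    have r1 : 0 ≤ 1 / (w₁ * w₂ * t ^ 2) := by positivity
    rw [abs_le]
    constructor <;> linarith
end

section
/- Let w₁, w₂, a > 0, let 0 < λ < min(2π/w₁, 2π/w₂), and let σ be real with 1 < σ < 2. Define G₂(a,w,t) = e^{(w₁+w₂−a)t}/((e^{w₁t}−1)(e^{w₂t}−1)) − 1/(w₁w₂t²) for t > 0. Then ∫₀^∞ G₂(a,w,t) t^{σ−1} dt = ∫_λ^∞ e^{(w₁+w₂−a)t}/((e^{w₁t}−1)(e^{w₂t}−1)) t^{σ−1} dt + ∫₀^λ ( e^{(w₁+w₂−a)t}/((e^{w₁t}−1)(e^{w₂t}−1)) − 1/(w₁w₂t²) − (w₁+w₂−2a)/(2w₁w₂t) ) t^{σ−1} dt + (1/(w₁w₂)) λ^{σ−2}/(σ−2) + ((w₁+w₂−2a)/(2w₁w₂)) λ^{σ−1}/(σ−1). -/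
open MeasureTheory Real Set

theorem real_exp_taylor_bound (x : ℝ) (n : ℕ) :
    |Real.exp x - ∑ m ∈ Finset.range n, x ^ m / (m.factorial : ℝ)| ≤ |x| ^ n * Real.exp |x| := by
  have h := Complex.norm_exp_sub_sum_le_norm_mul_exp (x : ℂ) n
  rw [Complex.norm_real, Real.norm_eq_abs] at h
  rw [← Real.norm_eq_abs, ← Complex.norm_real]
  push_cast
  exact h

theorem exp_rem (b L t k : ℝ) (n : ℕ) (ht : 0 < t) (htL : t < L)
    (hk : k = (Real.exp (b * t) - ∑ m ∈ Finset.range n, (b * t) ^ m / (m.factorial : ℝ)) / t ^ n) :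
    k ∈ Set.Icc (-(|b| ^ n * Real.exp (|b| * L))) (|b| ^ n * Real.exp (|b| * L)) := by
  rw [Set.mem_Icc, ← abs_le, hk, abs_div, abs_of_pos (pow_pos ht n), div_le_iff₀ (pow_pos ht n)]
  refine (real_exp_taylor_bound (b * t) n).trans ?_
  rw [abs_mul, abs_of_pos ht, mul_pow]
  have : Real.exp (|b| * t) ≤ Real.exp (|b| * L) := by gcongr
  calc _ ≤ |b| ^ n * t ^ n * Real.exp (|b| * L) := by gcongr
    _ = _ := by ring

theorem R_bound (w₁ w₂ a lam : ℝ) (hw₁ : 0 < w₁) (hw₂ : 0 < w₂) :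
    ∃ C : ℝ, ∀ t ∈ Set.Ioo (0 : ℝ) lam,
      |Real.exp ((w₁ + w₂ - a) * t) /
                ((Real.exp (w₁ * t) - 1) * (Real.exp (w₂ * t) - 1)) -
              1 / (w₁ * w₂ * t ^ 2) -
              (w₁ + w₂ - 2 * a) / (2 * w₁ * w₂ * t)| ≤ C := by
  set b := w₁ + w₂ - a with hb
  let F : ℝ × ℝ × ℝ × ℝ → ℝ := fun z =>
    2 * w₁ * w₂ * z.2.1 - w₁ * w₂ * (w₁ + w₂ - 2 * a) * (w₁ + w₂) / 2
      - (w₁ ^ 2 * w₂ ^ 2 / 4 + (w₁ + w₁ ^ 2 * z.1 / 2) * z.2.2.2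
        + (w₂ + w₂ ^ 2 * z.1 / 2) * z.2.2.1 + z.1 ^ 2 * z.2.2.1 * z.2.2.2)
        * (2 + (w₁ + w₂ - 2 * a) * z.1)
  have hF : Continuous F := by fun_prop
  let I : ℝ → ℕ → Set ℝ := fun b n =>
    Set.Icc (-(|b| ^ n * Real.exp (|b| * lam))) (|b| ^ n * Real.exp (|b| * lam))
  have hI : ∀ b n, IsCompact (I b n) := fun b n => isCompact_Icc
  obtain ⟨C, hC⟩ := ((isCompact_Icc (a := (0:ℝ)) (b := lam)).prod
    ((hI b 2).prod ((hI w₁ 3).prod (hI w₂ 3)))).exists_bound_of_continuousOn hF.continuousOn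
  refine ⟨C / (2 * w₁ ^ 2 * w₂ ^ 2), fun t ht => ?_⟩
  obtain ⟨ht0, htL⟩ := ht
  obtain ⟨e, he⟩ : ∃ e, e = (Real.exp (b * t) -
    ∑ m ∈ Finset.range 2, (b * t) ^ m / (m.factorial : ℝ)) / t ^ 2 := ⟨_, rfl⟩
  obtain ⟨p, hp⟩ : ∃ e, e = (Real.exp (w₁ * t) -
    ∑ m ∈ Finset.range 3, (w₁ * t) ^ m / (m.factorial : ℝ)) / t ^ 3 := ⟨_, rfl⟩
  obtain ⟨q, hq⟩ : ∃ e, e = (Real.exp (w₂ * t) -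
    ∑ m ∈ Finset.range 3, (w₂ * t) ^ m / (m.factorial : ℝ)) / t ^ 3 := ⟨_, rfl⟩
  have hz := hC (t, e, p, q) ⟨⟨ht0.le, htL.le⟩, exp_rem b lam t e 2 ht0 htL he,
    exp_rem w₁ lam t p 3 ht0 htL hp, exp_rem w₂ lam t q 3 ht0 htL hq⟩
  rw [eq_div_iff (by positivity)] at he hp hq
  simp only [Finset.sum_range_succ, Finset.sum_range_zero, Nat.factorial] at he hp hq
  norm_num at he hp hq
  have hu : w₁ * t ≤ Real.exp (w₁ * t) - 1 := by linarith [Real.add_one_le_exp (w₁ * t)]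
  have hv : w₂ * t ≤ Real.exp (w₂ * t) - 1 := by linarith [Real.add_one_le_exp (w₂ * t)]
  have hE : Real.exp (b * t) = 1 + b * t + t ^ 2 * e := by linarith
  have hU : Real.exp (w₁ * t) - 1 = w₁ * t + (w₁ * t) ^ 2 / 2 + t ^ 3 * p := by linarith
  have hV : Real.exp (w₂ * t) - 1 = w₂ * t + (w₂ * t) ^ 2 / 2 + t ^ 3 * q := by linarith
  generalize Real.exp (w₁ * t) - 1 = u at *
  generalize Real.exp (w₂ * t) - 1 = v at *
  generalize Real.exp (b * t) = E at *
  have hw1t : 0 < w₁ * t := by positivity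
  have hw2t : 0 < w₂ * t := by positivity
  have hu0 : 0 < u := by linarith
  have hv0 : 0 < v := by linarith
  have key : E / (u * v) - 1 / (w₁ * w₂ * t ^ 2) - (w₁ + w₂ - 2 * a) / (2 * w₁ * w₂ * t)
      = F (t, e, p, q) * t ^ 4 / (2 * w₁ * w₂ * t ^ 2 * (u * v)) := by
    have h1 : E / (u * v) - 1 / (w₁ * w₂ * t ^ 2) - (w₁ + w₂ - 2 * a) / (2 * w₁ * w₂ * t)
      = (2 * w₁ * w₂ * t ^ 2 * E - (u * v) * (2 + (w₁ + w₂ - 2 * a) * t))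
        / (2 * w₁ * w₂ * t ^ 2 * (u * v)) := by
      field_simp
      ring
    rw [h1]
    congr 1
    rw [hE, hU, hV, hb]
    simp only [F]
    ring
  rw [key, abs_div, abs_mul, abs_of_pos (show 0 < 2 * w₁ * w₂ * t ^ 2 * (u * v) by positivity),
    abs_of_pos (show 0 < t ^ 4 by positivity), div_le_div_iff₀ (by positivity) (by positivity)]
  have huv : (w₁ * t) * (w₂ * t) ≤ u * v := by gcongr
  rw [Real.norm_eq_abs] at hz
  have hC0 : 0 ≤ C := (abs_nonneg _).trans hz
  calc |F (t, e, p, q)| * t ^ 4 * (2 * w₁ ^ 2 * w₂ ^ 2)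
      ≤ C * t ^ 4 * (2 * w₁ ^ 2 * w₂ ^ 2) := by gcongr
    _ = C * (2 * w₁ * w₂ * t ^ 2 * ((w₁ * t) * (w₂ * t))) := by ring
    _ ≤ _ := by gcongr

theorem K_int (w₁ w₂ a lam : ℝ) (hw₁ : 0 < w₁) (hw₂ : 0 < w₂) (ha : 0 < a)
    (hlam : 0 < lam) (σ : ℝ) (hσ : 1 < σ) :
    IntegrableOn (fun t => Real.exp ((w₁ + w₂ - a) * t) /
              ((Real.exp (w₁ * t) - 1) * (Real.exp (w₂ * t) - 1)) * t ^ (σ - 1))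
      (Set.Ioi lam) := by
  have h0 := integrableOn_rpow_mul_exp_neg_mul_rpow (p := 1) (s := σ - 1) (b := a)
    (by linarith) one_pos ha
  have h1 := (h0.mono_set (Set.Ioi_subset_Ioi hlam.le)).const_mul
    (1 / ((1 - Real.exp (-(w₁ * lam))) * (1 - Real.exp (-(w₂ * lam)))))
  refine Integrable.mono' h1 (by
    refine Measurable.aestronglyMeasurable ?_
    fun_prop) ?_
  refine (ae_restrict_iff' measurableSet_Ioi).2 (Filter.Eventually.of_forall fun t ht => ?_)
  have ht' : lam < t := ht
  have ht0 : 0 < t := hlam.trans ht'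
  have aux : ∀ w : ℝ, 0 < w → 0 < 1 - Real.exp (-(w * lam)) ∧
      Real.exp (w * t) * (1 - Real.exp (-(w * lam))) ≤ Real.exp (w * t) - 1 := by
    intro w hw
    constructor
    · have : Real.exp (-(w * lam)) < 1 := Real.exp_lt_one_iff.2 (by have := mul_pos hw hlam; linarith)
      linarith
    · rw [mul_sub, ← Real.exp_add]
      have : 1 ≤ Real.exp (w * t + -(w * lam)) := Real.one_le_exp (by nlinarith)
      linarith
  obtain ⟨p1, q1⟩ := aux w₁ hw₁
  obtain ⟨p2, q2⟩ := aux w₂ hw₂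
  have r1 : 0 < Real.exp (w₁ * t) - 1 := lt_of_lt_of_le (by positivity) q1
  have r2 : 0 < Real.exp (w₂ * t) - 1 := lt_of_lt_of_le (by positivity) q2
  rw [Real.norm_of_nonneg (by positivity), Real.rpow_one]
  have : Real.exp ((w₁ + w₂ - a) * t) /
              ((Real.exp (w₁ * t) - 1) * (Real.exp (w₂ * t) - 1)) ≤
      1 / ((1 - Real.exp (-(w₁ * lam))) * (1 - Real.exp (-(w₂ * lam)))) * Real.exp (-a * t) := by
    rw [div_mul_eq_mul_div, one_mul, div_le_div_iff₀ (by positivity) (by positivity)]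
    have e1 : Real.exp ((w₁ + w₂ - a) * t)
        = Real.exp (-a * t) * (Real.exp (w₁ * t) * Real.exp (w₂ * t)) := by
      rw [← Real.exp_add, ← Real.exp_add]; congr 1; ring
    rw [e1]
    calc _ = Real.exp (-a * t) * ((Real.exp (w₁ * t) * (1 - Real.exp (-(w₁ * lam)))) *
          (Real.exp (w₂ * t) * (1 - Real.exp (-(w₂ * lam))))) := by ring
      _ ≤ _ := by gcongr
  calc _ ≤ _ := mul_le_mul_of_nonneg_right this (by positivity)
    _ = _ := by ring

theorem stmt6 (w₁ w₂ a lam : ℝ) (hw₁ : 0 < w₁) (hw₂ : 0 < w₂) (ha : 0 < a)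
    (hlam : 0 < lam) (hlam' : lam < min (2 * Real.pi / w₁) (2 * Real.pi / w₂))
    (σ : ℝ) (hσ : 1 < σ) (hσ' : σ < 2) :
    ∫ t in Set.Ioi (0 : ℝ), G₂ a w₁ w₂ t * t ^ (σ - 1) =
      (∫ t in Set.Ioi lam,
          Real.exp ((w₁ + w₂ - a) * t) /
              ((Real.exp (w₁ * t) - 1) * (Real.exp (w₂ * t) - 1)) * t ^ (σ - 1)) +
        (∫ t in Set.Ioo (0 : ℝ) lam,
          (Real.exp ((w₁ + w₂ - a) * t) /
                ((Real.exp (w₁ * t) - 1) * (Real.exp (w₂ * t) - 1)) -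
              1 / (w₁ * w₂ * t ^ 2) -
              (w₁ + w₂ - 2 * a) / (2 * w₁ * w₂ * t)) * t ^ (σ - 1)) +
        1 / (w₁ * w₂) * (lam ^ (σ - 2) / (σ - 2)) +
        (w₁ + w₂ - 2 * a) / (2 * w₁ * w₂) * (lam ^ (σ - 1) / (σ - 1)) := by
  have hK := K_int w₁ w₂ a lam hw₁ hw₂ ha hlam σ hσ
  -- power integrals
  have hP1 : IntegrableOn (fun t : ℝ => t ^ (σ - 3)) (Set.Ioi lam) :=
    integrableOn_Ioi_rpow_of_lt (by linarith) hlam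
  have hP1v : ∫ t in Set.Ioi lam, t ^ (σ - 3) = -(lam ^ (σ - 2) / (σ - 2)) := by
    rw [integral_Ioi_rpow_of_lt (by linarith) hlam, show σ - 3 + 1 = σ - 2 by ring, neg_div]
  have hpow : ∀ r : ℝ, -1 < r → IntegrableOn (fun t : ℝ => t ^ r) (Set.Ioo 0 lam) := by
    intro r hr
    have := (intervalIntegral.intervalIntegrable_rpow' (a := 0) (b := lam) hr).1
    exact this.mono_set Set.Ioo_subset_Ioc_self
  have hP2 := hpow (σ - 2) (by linarith)
  have hP2v : ∫ t in Set.Ioo 0 lam, t ^ (σ - 2) = lam ^ (σ - 1) / (σ - 1) := by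
    rw [← integral_Ioc_eq_integral_Ioo, ← intervalIntegral.integral_of_le hlam.le,
      integral_rpow (Or.inl (by linarith)), show σ - 2 + 1 = σ - 1 by ring,
      Real.zero_rpow (by linarith), sub_zero]
  have hR : IntegrableOn (fun t => (Real.exp ((w₁ + w₂ - a) * t) /
                ((Real.exp (w₁ * t) - 1) * (Real.exp (w₂ * t) - 1)) -
              1 / (w₁ * w₂ * t ^ 2) -
              (w₁ + w₂ - 2 * a) / (2 * w₁ * w₂ * t)) * t ^ (σ - 1)) (Set.Ioo 0 lam) := by
    obtain ⟨C, hC⟩ := R_bound w₁ w₂ a lam hw₁ hw₂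
    refine Integrable.mono' ((hpow (σ - 1) (by linarith)).const_mul C) (by
      refine Measurable.aestronglyMeasurable ?_
      fun_prop) ?_
    refine (ae_restrict_iff' measurableSet_Ioo).2 (Filter.Eventually.of_forall fun t ht => ?_)
    have ht0 : 0 < t := ht.1
    rw [norm_mul, Real.norm_eq_abs, Real.norm_of_nonneg (by positivity)]
    exact mul_le_mul_of_nonneg_right (hC t ht) (by positivity)
  have hp3 : ∀ t : ℝ, 0 < t → t ^ (σ - 1) = t ^ (σ - 3) * t ^ 2 := by
    intro t ht
    rw [← Real.rpow_natCast t 2, ← Real.rpow_add ht]; congr 1; push_cast; ring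
  have hp2 : ∀ t : ℝ, 0 < t → t ^ (σ - 1) = t ^ (σ - 2) * t := by
    intro t ht
    nth_rewrite 3 [← Real.rpow_one t]
    rw [← Real.rpow_add ht]; congr 1; ring
  have E1 : Set.EqOn (fun t => Real.exp ((w₁ + w₂ - a) * t) /
              ((Real.exp (w₁ * t) - 1) * (Real.exp (w₂ * t) - 1)) * t ^ (σ - 1)
              - 1 / (w₁ * w₂) * t ^ (σ - 3))
        (fun t => G₂ a w₁ w₂ t * t ^ (σ - 1)) (Set.Ioi lam) := by
    intro t ht
    have ht0 : 0 < t := hlam.trans ht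
    simp only [G₂]
    rw [sub_mul]
    congr 1
    rw [hp3 t ht0]
    field_simp
  have E2 : Set.EqOn (fun t => (Real.exp ((w₁ + w₂ - a) * t) /
                ((Real.exp (w₁ * t) - 1) * (Real.exp (w₂ * t) - 1)) -
              1 / (w₁ * w₂ * t ^ 2) -
              (w₁ + w₂ - 2 * a) / (2 * w₁ * w₂ * t)) * t ^ (σ - 1)
              + (w₁ + w₂ - 2 * a) / (2 * w₁ * w₂) * t ^ (σ - 2))
        (fun t => G₂ a w₁ w₂ t * t ^ (σ - 1)) (Set.Ioo 0 lam) := by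
    intro t ht
    have ht0 : 0 < t := ht.1
    have : (w₁ + w₂ - 2 * a) / (2 * w₁ * w₂) * t ^ (σ - 2)
        = (w₁ + w₂ - 2 * a) / (2 * w₁ * w₂ * t) * t ^ (σ - 1) := by
      rw [hp2 t ht0]
      field_simp
    simp only [G₂]
    rw [this]
    ring
  have I1 := (hK.sub (hP1.const_mul (1 / (w₁ * w₂)))).congr_fun E1 measurableSet_Ioi
  have I2 := (hR.add (hP2.const_mul ((w₁ + w₂ - 2 * a) / (2 * w₁ * w₂)))).congr_fun E2
    measurableSet_Ioo
  rw [← Set.Ioc_union_Ioi_eq_Ioi hlam.le, setIntegral_union Set.Ioc_disjoint_Ioi_same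
    measurableSet_Ioi ((integrableOn_Ioc_iff_integrableOn_Ioo).2 I2) I1,
    integral_Ioc_eq_integral_Ioo, ← setIntegral_congr_fun measurableSet_Ioi E1,
    ← setIntegral_congr_fun measurableSet_Ioo E2, integral_sub hK (hP1.const_mul _),
    integral_add hR (hP2.const_mul _), integral_const_mul, integral_const_mul, hP1v, hP2v]
  ring
end

section
/- Let w₁, w₂ > 0 and let n ≥ 1 be an integer. Define f_{w,n}(a) = (w₁+w₂)²aⁿ − w₁²(a−w₂)ⁿ − w₂²(a−w₁)ⁿ. Then f_{w,n}(a) > 0 for every real a ≥ (w₁+w₂)/2. -/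
theorem stmt9 (w₁ w₂ : ℝ) (hw₁ : 0 < w₁) (hw₂ : 0 < w₂) (n : ℕ) (hn : 1 ≤ n)
    (a : ℝ) (ha : (w₁ + w₂) / 2 ≤ a) :
    0 < (w₁ + w₂) ^ 2 * a ^ n - w₁ ^ 2 * (a - w₂) ^ n - w₂ ^ 2 * (a - w₁) ^ n := by
  have hpos : 0 < a := by linarith
  have key : ∀ w : ℝ, 0 < w → w < 2 * a → (a - w) ^ n ≤ a ^ n := by
    intro w h1 h2
    have h3 : |a - w| ≤ a := abs_le.mpr ⟨by linarith, by linarith⟩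
    calc (a - w) ^ n ≤ |(a - w) ^ n| := le_abs_self _
      _ = |a - w| ^ n := abs_pow _ _
      _ ≤ a ^ n := pow_le_pow_left₀ (abs_nonneg _) h3 n
  have h1 := mul_le_mul_of_nonneg_left (key w₂ hw₂ (by linarith)) (sq_nonneg w₁)
  have h2 := mul_le_mul_of_nonneg_left (key w₁ hw₁ (by linarith)) (sq_nonneg w₂)
  have h3 : 0 < 2 * w₁ * w₂ * a ^ n := by positivity
  have h4 : (w₁ + w₂) ^ 2 * a ^ n = w₁ ^ 2 * a ^ n + w₂ ^ 2 * a ^ n + 2 * w₁ * w₂ * a ^ n := by ring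
  linarith
end

section
/- Let w₁, w₂ > 0 and let n ≥ 1 be an integer. Define f_{w,n}(a) = (w₁+w₂)²aⁿ − w₁²(a−w₂)ⁿ − w₂²(a−w₁)ⁿ. Then f_{w,n} is strictly monotone increasing on the interval [(w₁+w₂)/2, ∞), i.e., for all a, b with (w₁+w₂)/2 ≤ a < b one has f_{w,n}(a) < f_{w,n}(b). -/
theorem stmt10 (w₁ w₂ : ℝ) (hw₁ : 0 < w₁) (hw₂ : 0 < w₂) (n : ℕ) (hn : 1 ≤ n) :
    StrictMonoOn
      (fun a : ℝ =>
        (w₁ + w₂) ^ 2 * a ^ n - w₁ ^ 2 * (a - w₂) ^ n - w₂ ^ 2 * (a - w₁) ^ n)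
      (Set.Ici ((w₁ + w₂) / 2)) := by
  obtain ⟨m, rfl⟩ : ∃ m, n = m + 1 := ⟨n - 1, by omega⟩
  apply strictMonoOn_of_deriv_pos (convex_Ici _)
  · fun_prop
  · intro a ha
    rw [interior_Ici, Set.mem_Ioi] at ha
    have hpos : 0 < a := by linarith
    have key : ∀ w : ℝ, 0 < w → w / 2 ≤ a → (a - w) ^ m ≤ a ^ m := by
      intro w hw h
      calc (a - w) ^ m ≤ |(a - w) ^ m| := le_abs_self _
        _ = |a - w| ^ m := abs_pow _ _
        _ ≤ a ^ m := pow_le_pow_left₀ (abs_nonneg _) (abs_le.2 ⟨by linarith, by linarith⟩) m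
    have k1 := mul_le_mul_of_nonneg_left (key w₁ hw₁ (by linarith)) (sq_nonneg w₂)
    have k2 := mul_le_mul_of_nonneg_left (key w₂ hw₂ (by linarith)) (sq_nonneg w₁)
    have hp : 0 < w₁ * w₂ * a ^ m := by positivity
    have hd : ∀ w : ℝ, HasDerivAt (fun x : ℝ => (x - w) ^ (m + 1))
        (((m : ℝ) + 1) * (a - w) ^ m) a := by
      intro w
      have h := ((hasDerivAt_id a).sub_const w).fun_pow (m + 1)
      simpa using h
    have h0 : HasDerivAt (fun x : ℝ => x ^ (m + 1)) (((m : ℝ) + 1) * a ^ m) a := by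
      simpa using hd 0
    have hD := ((h0.const_mul ((w₁ + w₂) ^ 2)).sub ((hd w₂).const_mul (w₁ ^ 2))).sub
      ((hd w₁).const_mul (w₂ ^ 2))
    have hD' := hD.deriv
    refine lt_of_lt_of_eq ?_ hD'.symm
    have : 0 < ((m : ℝ) + 1) *
        ((w₁ + w₂) ^ 2 * a ^ m - w₁ ^ 2 * (a - w₂) ^ m - w₂ ^ 2 * (a - w₁) ^ m) := by
      apply mul_pos (by positivity)
      nlinarith
    linarith
end

section
/- For every real c > 0 and every integer n ≥ 1, one has (1+c)^{n+2} − (1−c)ⁿ − c²(c−1)ⁿ > 0. -/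
theorem stmt11 (c : ℝ) (hc : 0 < c) (n : ℕ) (hn : 1 ≤ n) :
    0 < (1 + c) ^ (n + 2) - (1 - c) ^ n - c ^ 2 * (c - 1) ^ n := by
  have key : ∀ x : ℝ, |x| ≤ 1 + c → x ^ n ≤ (1 + c) ^ n := by
    intro x hx
    calc x ^ n ≤ |x ^ n| := le_abs_self _
      _ = |x| ^ n := abs_pow x n
      _ ≤ (1 + c) ^ n := pow_le_pow_left₀ (abs_nonneg x) hx n
  have h1 := key (1 - c) (abs_le.mpr ⟨by linarith, by linarith⟩)
  have h2 := key (c - 1) (abs_le.mpr ⟨by linarith, by linarith⟩)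
  have h3 : c ^ 2 * (c - 1) ^ n ≤ c ^ 2 * (1 + c) ^ n :=
    mul_le_mul_of_nonneg_left h2 (sq_nonneg c)
  have h4 : 0 < 2 * c * (1 + c) ^ n := by positivity
  have h5 : (1 + c) ^ (n + 2) = (1 + c) ^ n + c ^ 2 * (1 + c) ^ n + 2 * c * (1 + c) ^ n := by
    ring
  linarith
end

section
/- Let w₁, w₂ > 0 and a ≥ (w₁+w₂)/2. Then for every t > 0, (w₁+w₂)² e^{at} − w₁² e^{(a−w₂)t} − w₂² e^{(a−w₁)t} > 2w₁w₂ + 4w₁w₂(w₁+w₂−a)t + w₁w₂(w₁+w₂−a)² t². -/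
open Real

lemma core13 (m d : ℝ) (hd : 0 ≤ d) (hm : d < m) :
    (m^2 - d^2) * (2 + 4*m + m^2) <
      4*m^2*exp m - (m+d)^2 * exp d - (m-d)^2 * exp (-d) := by
  have h1 : 1 ≤ cosh d := one_le_cosh d
  have h2 : d ≤ sinh d := self_le_sinh_iff.2 hd
  rw [cosh_eq] at h1
  rw [sinh_eq] at h2
  have hk : 0 < m - d := sub_pos.2 hm
  have h3 : 1 + d ≤ exp d := by linarith [add_one_le_exp d]
  have h4 : 1 + (m-d) + (m-d)^2/2 ≤ exp (m-d) := quadratic_le_exp_of_nonneg hk.le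
  have h5 : exp m = exp d * exp (m-d) := by rw [← exp_add]; ring_nf
  have h6 : (m-d) * (1 + (m+d)/2) ≤ exp m - exp d := by
    have : (1+d) * ((m-d) + (m-d)^2/2) ≤ exp d * (exp (m-d) - 1) := by
      apply mul_le_mul h3 (by linarith) (by positivity) (exp_pos d).le
    rw [h5]
    nlinarith [mul_nonneg hd (sq_nonneg (m-d))]
  have hm0 : 0 < m := by linarith
  have e1 : 4*m^2*((m-d) * (1 + (m+d)/2)) ≤ 4*m^2*(exp m - exp d) :=
    mul_le_mul_of_nonneg_left h6 (by positivity)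
  have e2 : 4*m*(m-d)*d ≤ 4*m*(m-d)*((exp d - exp (-d))/2) :=
    mul_le_mul_of_nonneg_left h2 (by positivity)
  have e3 : 2*(m-d)*(m+d)*1 ≤ 2*(m-d)*(m+d)*((exp d + exp (-d))/2) :=
    mul_le_mul_of_nonneg_left h1 (by positivity)
  have e4 : 0 < m^2*(m-d)*(m+d) := by positivity
  nlinarith

lemma scaled13 (x y b : ℝ) (hy : 0 < y) (hxy : y ≤ x) (hb : (x+y)/2 ≤ b) :
    x*y*(2 + 4*(x+y-b) + (x+y-b)^2) <
      (x+y)^2 * exp b - x^2 * exp (b-y) - y^2 * exp (b-x) := by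
  have hx : 0 < x := by linarith
  rw [sub_eq_add_neg b y, sub_eq_add_neg b x, exp_add, exp_add]
  rcases le_total (x+y) b with h | h
  · have k1 : exp (-y) ≤ 1 := exp_le_one_iff.2 (by linarith)
    have k2 : exp (-x) ≤ 1 := exp_le_one_iff.2 (by linarith)
    have q := quadratic_le_exp_of_nonneg (x := b) (by linarith)
    have q2 : 2 + 4*(x+y-b) + (x+y-b)^2 < 2 * exp b := by
      nlinarith
    have q3 := mul_lt_mul_of_pos_left q2 (mul_pos hx hy)
    have q4 : x^2 * (exp b * exp (-y)) ≤ x^2 * (exp b * 1) := by gcongr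
    have q5 : y^2 * (exp b * exp (-x)) ≤ y^2 * (exp b * 1) := by gcongr
    nlinarith
  · have c := core13 ((x+y)/2) ((x-y)/2) (by linarith) (by linarith)
    have hd1 : exp ((x-y)/2) = exp ((x+y)/2) * exp (-y) := by rw [← exp_add]; ring_nf
    have hd2 : exp (-((x-y)/2)) = exp ((x+y)/2) * exp (-x) := by rw [← exp_add]; ring_nf
    rw [hd1, hd2] at c
    have hE : exp b = exp ((x+y)/2) * exp (b - (x+y)/2) := by rw [← exp_add]; ring_nf
    have h1 : 1 ≤ exp (b - (x+y)/2) := one_le_exp (by linarith)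
    have hu : x*y*(2 + 4*(x+y-b) + (x+y-b)^2) ≤
        x*y*(2 + 4*((x+y)/2) + ((x+y)/2)^2) := by
      have : 0 ≤ x+y-b := by linarith
      have : x+y-b ≤ (x+y)/2 := by linarith
      gcongr
    have hpos : 0 < x*y*(2 + 4*((x+y)/2) + ((x+y)/2)^2) := by positivity
    have c' : x*y*(2 + 4*((x+y)/2) + ((x+y)/2)^2) <
      exp ((x+y)/2) * ((x+y)^2 - x^2*exp (-y) - y^2*exp (-x)) := by
      convert c using 1 <;> ring
    have := mul_le_mul_of_nonneg_left h1 (hpos.trans c').le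
    rw [hE]
    linarith

theorem stmt13 (w₁ w₂ a : ℝ) (hw₁ : 0 < w₁) (hw₂ : 0 < w₂)
    (ha : (w₁ + w₂) / 2 ≤ a) (t : ℝ) (ht : 0 < t) :
    2 * w₁ * w₂ + 4 * w₁ * w₂ * (w₁ + w₂ - a) * t +
        w₁ * w₂ * (w₁ + w₂ - a) ^ 2 * t ^ 2 <
      (w₁ + w₂) ^ 2 * Real.exp (a * t) - w₁ ^ 2 * Real.exp ((a - w₂) * t) -
        w₂ ^ 2 * Real.exp ((a - w₁) * t) := by
  have hb := mul_le_mul_of_nonneg_right ha ht.le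
  have ht2 : 0 < t^2 := by positivity
  refine lt_of_mul_lt_mul_left ?_ ht2.le
  rw [sub_mul, sub_mul]
  rcases le_total w₂ w₁ with h | h
  · have := scaled13 (w₁*t) (w₂*t) (a*t) (by positivity) (by gcongr) (by linarith)
    linarith
  · have := scaled13 (w₂*t) (w₁*t) (a*t) (by positivity) (by gcongr) (by linarith)
    linarith
end

section
/- Let w₁, w₂ > 0 and 0 < a < (w₁+w₂)/2, define G₂(a,w,t) = e^{(w₁+w₂−a)t}/((e^{w₁t}−1)(e^{w₂t}−1)) − 1/(w₁w₂t²) for t > 0, and let t₀ > 0 be such that G₂(a,w,t₀) = 0, G₂(a,w,t) > 0 for 0 < t < t₀ and G₂(a,w,t) < 0 for t > t₀. Then for every real σ with 1 < σ < 2, ∫₀^∞ G₂(a,w,t) (t/t₀)^σ log(t/t₀) (dt/t) < 0. -/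
open MeasureTheory Real Set

theorem G₂_meas (a w₁ w₂ : ℝ) : Measurable (G₂ a w₁ w₂) := by
  unfold G₂
  fun_prop

theorem G₂_upper (w₁ w₂ a : ℝ) (hw₁ : 0 < w₁) (hw₂ : 0 < w₂)
    (ha : 0 < a) (t₀ t : ℝ) (ht : 0 < t) (htt : t ≤ t₀) :
    G₂ a w₁ w₂ t ≤ ((w₁ + w₂) * Real.exp ((w₁ + w₂) * t₀) / (w₁ * w₂)) / t := by
  have h1 : w₁ * t ≤ Real.exp (w₁ * t) - 1 := by linarith [Real.add_one_le_exp (w₁ * t)]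
  have h2 : w₂ * t ≤ Real.exp (w₂ * t) - 1 := by linarith [Real.add_one_le_exp (w₂ * t)]
  have p1 : 0 < w₁ * t := by positivity
  have p2 : 0 < w₂ * t := by positivity
  have hE : Real.exp ((w₁ + w₂ - a) * t) ≤ Real.exp ((w₁ + w₂) * t) := by
    apply Real.exp_le_exp.2; nlinarith [mul_pos ha ht]
  have hA : Real.exp ((w₁ + w₂ - a) * t) / ((Real.exp (w₁ * t) - 1) * (Real.exp (w₂ * t) - 1))
      ≤ Real.exp ((w₁ + w₂) * t) / ((w₁ * t) * (w₂ * t)) := by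
    gcongr
    linarith
  have hE2 : Real.exp ((w₁ + w₂) * t) - 1 ≤ (w₁ + w₂) * t * Real.exp ((w₁ + w₂) * t₀) := by
    have h3 := Real.add_one_le_exp (-((w₁ + w₂) * t))
    have h4 : Real.exp (-((w₁ + w₂) * t)) * Real.exp ((w₁ + w₂) * t) = 1 := by
      rw [← Real.exp_add]; simp
    have h5 : Real.exp ((w₁ + w₂) * t) ≤ Real.exp ((w₁ + w₂) * t₀) := by
      apply Real.exp_le_exp.2; gcongr
    have h6 : (-((w₁ + w₂) * t) + 1) * Real.exp ((w₁ + w₂) * t) ≤ 1 := by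
      exact (mul_le_mul_of_nonneg_right h3 (Real.exp_pos _).le).trans h4.le
    have h7 : (w₁ + w₂) * t * Real.exp ((w₁ + w₂) * t)
      ≤ (w₁ + w₂) * t * Real.exp ((w₁ + w₂) * t₀) := by gcongr
    linarith
  unfold G₂
  calc _ ≤ Real.exp ((w₁ + w₂) * t) / ((w₁ * t) * (w₂ * t)) - 1 / (w₁ * w₂ * t ^ 2) := by gcongr
    _ = (Real.exp ((w₁ + w₂) * t) - 1) / (w₁ * w₂ * t ^ 2) := by field_simp
    _ ≤ ((w₁ + w₂) * t * Real.exp ((w₁ + w₂) * t₀)) / (w₁ * w₂ * t ^ 2) := by gcongr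
    _ = _ := by field_simp

theorem G₂_lower (w₁ w₂ a : ℝ) (hw₁ : 0 < w₁) (hw₂ : 0 < w₂) (t : ℝ) (ht : 0 < t) :
    -(1 / (w₁ * w₂ * t ^ 2)) ≤ G₂ a w₁ w₂ t := by
  have h1 : 0 < Real.exp (w₁ * t) - 1 := by
    have : 0 < w₁ * t := by positivity
    linarith [Real.add_one_le_exp (w₁ * t)]
  have h2 : 0 < Real.exp (w₂ * t) - 1 := by
    have : 0 < w₂ * t := by positivity
    linarith [Real.add_one_le_exp (w₂ * t)]
  unfold G₂
  have : 0 < Real.exp ((w₁ + w₂ - a) * t) /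
    ((Real.exp (w₁ * t) - 1) * (Real.exp (w₂ * t) - 1)) := by positivity
  linarith

theorem stmt17 (w₁ w₂ a : ℝ) (hw₁ : 0 < w₁) (hw₂ : 0 < w₂)
    (ha : 0 < a) (ha' : a < (w₁ + w₂) / 2) (t₀ : ℝ) (ht₀ : 0 < t₀)
    (hzero : G₂ a w₁ w₂ t₀ = 0)
    (hpos : ∀ t : ℝ, 0 < t → t < t₀ → 0 < G₂ a w₁ w₂ t)
    (hneg : ∀ t : ℝ, t₀ < t → G₂ a w₁ w₂ t < 0)
    (σ : ℝ) (hσ : 1 < σ) (hσ' : σ < 2) :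
    ∫ t in Set.Ioi (0 : ℝ),
        G₂ a w₁ w₂ t * (t / t₀) ^ σ * Real.log (t / t₀) / t < 0 := by
  set f : ℝ → ℝ := fun t => G₂ a w₁ w₂ t * (t / t₀) ^ σ * Real.log (t / t₀) / t with hf
  have hfm : Measurable f := by
    have := G₂_meas a w₁ w₂
    have h2 : Measurable (fun t : ℝ => (t / t₀) ^ σ) := (measurable_id.div_const t₀).pow_const σ
    have h3 : Measurable (fun t : ℝ => Real.log (t / t₀)) :=
      Real.measurable_log.comp (measurable_id.div_const t₀)
    exact ((this.mul h2).mul h3).div measurable_id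
  have hlt : ∀ t, 0 < t → t ≠ t₀ → f t < 0 := by
    intro t ht hne
    have hx : 0 < (t / t₀) ^ σ := Real.rpow_pos_of_pos (by positivity) _
    apply div_neg_of_neg_of_pos _ ht
    rcases lt_or_gt_of_ne hne with h | h
    · exact mul_neg_of_pos_of_neg (mul_pos (hpos t ht h) hx)
        (Real.log_neg (by positivity) ((div_lt_one ht₀).2 h))
    · exact mul_neg_of_neg_of_pos (mul_neg_of_neg_of_pos (hneg t h) hx)
        (Real.log_pos ((one_lt_div ht₀).2 h))
  have hle : ∀ t, 0 < t → f t ≤ 0 := by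
    intro t ht
    by_cases h : t = t₀
    · simp [hf, h, hzero]
    · exact (hlt t ht h).le
  have I1 : IntegrableOn f (Set.Ioc 0 t₀) := by
    set ε := (σ - 1) / 2 with hε
    have hε0 : 0 < ε := by linarith
    set C := (w₁ + w₂) * Real.exp ((w₁ + w₂) * t₀) / (w₁ * w₂) with hC
    have hC0 : 0 < C := by positivity
    have hg : IntegrableOn (fun t : ℝ => (C / ε / t₀ ^ (σ - ε)) * t ^ (σ - ε - 2))
        (Set.Ioc 0 t₀) := by
      have := (intervalIntegral.intervalIntegrable_rpow' (a := 0) (b := t₀)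
        (r := σ - ε - 2) (by linarith)).1
      exact this.const_mul _
    refine Integrable.mono' hg hfm.aestronglyMeasurable ?_
    refine (ae_restrict_iff' measurableSet_Ioc).2 (Filter.Eventually.of_forall ?_)
    rintro t ⟨ht, htt⟩
    have hx : 0 < t / t₀ := by positivity
    have hx1 : t / t₀ ≤ 1 := (div_le_one ht₀).2 htt
    have hl := (Real.abs_log_mul_self_rpow_lt (t / t₀) ε hx hx1 hε0).le
    have hG0 : 0 ≤ G₂ a w₁ w₂ t := by
      rcases htt.lt_or_eq with h | h
      · exact (hpos t ht h).le
      · rw [h, hzero]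
    have hG := G₂_upper w₁ w₂ a hw₁ hw₂ ha t₀ t ht htt
    have e1 : (t / t₀) ^ σ = (t / t₀) ^ ε * (t / t₀) ^ (σ - ε) := by
      rw [← Real.rpow_add hx]; congr 1; ring
    have e2 : (t / t₀) ^ (σ - ε) = t ^ (σ - ε) / t₀ ^ (σ - ε) := Real.div_rpow ht.le ht₀.le _
    have e3 : t ^ (σ - ε - 2) = t ^ (σ - ε) / t ^ 2 := by
      rw [Real.rpow_sub ht]; norm_num
    have hp : 0 < (t / t₀) ^ (σ - ε) := Real.rpow_pos_of_pos hx _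
    have e4 : f t = G₂ a w₁ w₂ t * (Real.log (t / t₀) * (t / t₀) ^ ε)
        * (t / t₀) ^ (σ - ε) / t := by
      simp only [hf]; rw [e1]; ring
    rw [e4, Real.norm_eq_abs, abs_div, abs_mul, abs_mul, abs_of_nonneg hG0, abs_of_pos hp,
      abs_of_pos ht]
    calc _ ≤ (C / t) * (1 / ε) * (t / t₀) ^ (σ - ε) / t := by gcongr
      _ = _ := by rw [e2, e3]; field_simp
  have I2 : IntegrableOn f (Set.Ioi t₀) := by
    set ε := (2 - σ) / 2 with hε
    have hε0 : 0 < ε := by linarith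
    have hg : IntegrableOn (fun t : ℝ => (1 / (w₁ * w₂) / ε / t₀ ^ (σ + ε)) * t ^ (σ + ε - 3))
        (Set.Ioi t₀) :=
      (integrableOn_Ioi_rpow_of_lt (by linarith) ht₀).const_mul _
    refine Integrable.mono' hg hfm.aestronglyMeasurable ?_
    refine (ae_restrict_iff' measurableSet_Ioi).2 (Filter.Eventually.of_forall ?_)
    intro t htt
    have htt : t₀ < t := htt
    have ht : 0 < t := ht₀.trans htt
    have hx : 0 < t / t₀ := by positivity
    have hl0 : 0 < Real.log (t / t₀) := Real.log_pos ((one_lt_div ht₀).2 htt)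
    have hl := Real.log_le_rpow_div hx.le hε0
    have hG : |G₂ a w₁ w₂ t| ≤ 1 / (w₁ * w₂ * t ^ 2) := by
      rw [abs_of_neg (hneg t htt)]
      linarith [G₂_lower w₁ w₂ a hw₁ hw₂ t ht]
    have e1 : (t / t₀) ^ σ * (t / t₀) ^ ε = (t / t₀) ^ (σ + ε) := by
      rw [← Real.rpow_add hx]
    have e2 : (t / t₀) ^ (σ + ε) = t ^ (σ + ε) / t₀ ^ (σ + ε) := Real.div_rpow ht.le ht₀.le _
    have e3 : t ^ (σ + ε - 3) = t ^ (σ + ε) / t ^ 3 := by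
      rw [Real.rpow_sub ht]; norm_num
    have hp : 0 < (t / t₀) ^ σ := Real.rpow_pos_of_pos hx _
    simp only [hf]
    rw [Real.norm_eq_abs, abs_div, abs_mul, abs_mul, abs_of_pos hl0, abs_of_pos hp,
      abs_of_pos ht]
    calc _ ≤ (1 / (w₁ * w₂ * t ^ 2)) * (t / t₀) ^ σ * ((t / t₀) ^ ε / ε) / t := by gcongr
      _ = (1 / (w₁ * w₂ * t ^ 2)) * ((t / t₀) ^ σ * (t / t₀) ^ ε) / ε / t := by ring
      _ = _ := by rw [e1, e2, e3]; field_simp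
  have I : IntegrableOn f (Set.Ioi 0) := by
    rw [← Set.Ioc_union_Ioi_eq_Ioi ht₀.le]
    exact I1.union I2
  have key : 0 < ∫ t in Set.Ioi (0 : ℝ), -f t := by
    rw [setIntegral_pos_iff_support_of_nonneg_ae]
    · refine lt_of_lt_of_le ?_ (measure_mono (s := Set.Ioo 0 t₀) ?_)
      · simp [ht₀]
      · rintro t ⟨h1, h2⟩
        exact ⟨by simpa using (hlt t h1 h2.ne).ne, h1⟩
    · refine (ae_restrict_iff' measurableSet_Ioi).2 (Filter.Eventually.of_forall ?_)
      intro t ht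
      simpa using hle t ht
    · exact I.neg
  rw [integral_neg] at key
  linarith
end
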